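/- arXiv:2605.27576 — 7 statements merged into one kernel-verified Lean document; each statement's English description precedes it below -/
import Mathlib

section
/- Let A¹,…,Aᵐ ∈ ℝ^{N×N} be weighted adjacency matrices with Laplacians L¹,…,Lᵐ, and let d¹,…,dᵐ ∈ ℝ^N be pinning-gain vectors with Dᵏ = diag(dᵏ₁,…,dᵏ_N). If A¹,…,Aᵐ with d¹,…,dᵐ are jointly connected with the leader, then the symmetric matrix Σ_{k=1}^{m} (Lᵏ + Dᵏ) is positive definite. -/
/-!
Put `B = ∑ k, A k` and `e = ∑ k, d k`; the Laplacian is additive, so the matrix in question is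
`M = lap B + diagonal e`, whose quadratic form is
`2 xᵀ M x = ∑ i j, B i j (x i - x j)² + 2 ∑ i, e i (x i)²` (`two_mul_lap_add_diagonal`).
This is a sum of nonnegative terms. If it vanishes, then `x` takes equal values at followers joined
by an edge and vanishes at followers joined to the leader. Extended by `0` at the leader, `x` is
therefore constant along edges, hence on the connected leader graph, so `x = 0`.
-/

/-- A weighted adjacency matrix: symmetric, nonnegative entries, zero diagonal. -/
def IsWeightedAdjMatrix {N : ℕ} (A : Matrix (Fin N) (Fin N) ℝ) : Prop :=
  A.IsSymm ∧ (∀ i j, 0 ≤ A i j) ∧ ∀ i, A i i = 0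

/-- The Laplacian of a weighted adjacency matrix (with zero diagonal):
`L i i = ∑ k ≠ i, A i k` and `L i j = -A i j` for `i ≠ j`. -/
def lap {N : ℕ} (A : Matrix (Fin N) (Fin N) ℝ) : Matrix (Fin N) (Fin N) ℝ :=
  Matrix.diagonal (fun i => ∑ k, A i k) - A

/-- The graph on vertex set `{0} ∪ {1,…,N}` (leader `none`, followers `some i`) with an
edge between distinct followers `i, j` whenever `∑ k, A k i j > 0` and an edge between the
leader and follower `i` whenever `∑ k, d k i > 0`. -/
def leaderGraph {N m : ℕ} (A : Fin m → Matrix (Fin N) (Fin N) ℝ)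
    (d : Fin m → Fin N → ℝ) : SimpleGraph (Option (Fin N)) :=
  SimpleGraph.fromRel (fun x y =>
    match x, y with
    | some i, some j => 0 < ∑ k, A k i j
    | some i, none => 0 < ∑ k, d k i
    | none, _ => False)

/-- Twice the quadratic form of `lap B + diagonal e`, as a weighted sum of squares. -/
lemma two_mul_lap_add_diagonal {N : ℕ} {B : Matrix (Fin N) (Fin N) ℝ} (hB : B.IsSymm)
    (e x : Fin N → ℝ) :
    2 * (x ⬝ᵥ (lap B + Matrix.diagonal e).mulVec x) =
      ∑ i, ∑ j, B i j * (x i - x j) ^ 2 + 2 * ∑ i, e i * x i ^ 2 := by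
  have hswap : ∑ i, ∑ j, B i j * x j ^ 2 = ∑ i, ∑ j, B i j * x i ^ 2 := by
    rw [Finset.sum_comm]
    simp only [hB.apply]
  have hsq : ∑ i, ∑ j, B i j * (x i - x j) ^ 2 =
      ∑ i, ∑ j, B i j * x i ^ 2 + ∑ i, ∑ j, B i j * x j ^ 2
        - 2 * ∑ i, ∑ j, x i * (B i j * x j) := by
    simp only [Finset.mul_sum, ← Finset.sum_add_distrib, ← Finset.sum_sub_distrib]
    refine Finset.sum_congr rfl fun i _ => Finset.sum_congr rfl fun j _ => by ring
  have hform : x ⬝ᵥ (lap B + Matrix.diagonal e).mulVec x =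
      ∑ i, ∑ j, B i j * x i ^ 2 - ∑ i, ∑ j, x i * (B i j * x j) + ∑ i, e i * x i ^ 2 := by
    simp only [← Finset.sum_add_distrib, ← Finset.sum_sub_distrib, dotProduct]
    refine Finset.sum_congr rfl fun i _ => ?_
    rw [lap, Matrix.add_mulVec, Matrix.sub_mulVec, Pi.add_apply, Pi.sub_apply,
      Matrix.mulVec_diagonal, Matrix.mulVec_diagonal, Finset.sum_sub_distrib,
      ← Finset.sum_mul, ← Finset.mul_sum]
    simp only [Matrix.mulVec, dotProduct]
    ring
  rw [hform, hsq, hswap]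
  ring

/-- If the weights are nonnegative and the sum of squares representing the quadratic form at `x` is
nonpositive, then every term vanishes, so `x`, extended by `0` at the leader, is constant along the
edges of the leader graph. -/
lemma elim_eq_of_adj {N m : ℕ} {A : Fin m → Matrix (Fin N) (Fin N) ℝ} {d : Fin m → Fin N → ℝ}
    {x : Fin N → ℝ} (hB : ∀ i j, 0 ≤ ∑ k, A k i j) (he : ∀ i, 0 ≤ ∑ k, d k i)
    (h : ∑ i, ∑ j, (∑ k, A k i j) * (x i - x j) ^ 2 + 2 * ∑ i, (∑ k, d k i) * x i ^ 2 ≤ 0)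
    {u v : Option (Fin N)} (huv : (leaderGraph A d).Adj u v) :
    u.elim 0 x = v.elim 0 x := by
  have hB' : ∀ i j, 0 ≤ (∑ k, A k i j) * (x i - x j) ^ 2 := fun i j =>
    mul_nonneg (hB i j) (sq_nonneg _)
  have he' : ∀ i, 0 ≤ (∑ k, d k i) * x i ^ 2 := fun i => mul_nonneg (he i) (sq_nonneg _)
  have hS : 0 ≤ ∑ i, ∑ j, (∑ k, A k i j) * (x i - x j) ^ 2 :=
    Finset.sum_nonneg fun i _ => Finset.sum_nonneg fun j _ => hB' i j
  have hT : 0 ≤ ∑ i, (∑ k, d k i) * x i ^ 2 := Finset.sum_nonneg fun i _ => he' i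
  have hff : ∀ i j, 0 < ∑ k, A k i j → x i = x j := by
    intro i j hij
    have h1 : ∑ j, (∑ k, A k i j) * (x i - x j) ^ 2 ≤ 0 :=
      (Finset.single_le_sum (f := fun i => ∑ j, (∑ k, A k i j) * (x i - x j) ^ 2)
        (fun i _ => Finset.sum_nonneg fun j _ => hB' i j) (Finset.mem_univ i)).trans (by linarith)
    have h2 : (∑ k, A k i j) * (x i - x j) ^ 2 ≤ 0 :=
      (Finset.single_le_sum (f := fun j => (∑ k, A k i j) * (x i - x j) ^ 2)
        (fun j _ => hB' i j) (Finset.mem_univ j)).trans h1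
    have h3 : (x i - x j) ^ 2 ≤ 0 := nonpos_of_mul_nonpos_right h2 hij
    exact sub_eq_zero.mp (pow_eq_zero_iff two_ne_zero |>.mp (le_antisymm h3 (sq_nonneg _)))
  have hfl : ∀ i, 0 < ∑ k, d k i → x i = 0 := by
    intro i hi
    have h2 : (∑ k, d k i) * x i ^ 2 ≤ 0 :=
      (Finset.single_le_sum (f := fun i => (∑ k, d k i) * x i ^ 2)
        (fun i _ => he' i) (Finset.mem_univ i)).trans (by linarith)
    have h3 : x i ^ 2 ≤ 0 := nonpos_of_mul_nonpos_right h2 hi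
    exact pow_eq_zero_iff two_ne_zero |>.mp (le_antisymm h3 (sq_nonneg _))
  rw [leaderGraph, SimpleGraph.fromRel_adj] at huv
  obtain ⟨-, huv⟩ := huv
  rcases u with _ | i <;> rcases v with _ | j
  · rfl
  · exact (hfl j (huv.resolve_left id)).symm
  · exact hfl i (huv.resolve_right id)
  · exact huv.elim (hff i j) fun hji => (hff j i hji).symm

/-- If the adjacency matrices `A¹,…,Aᵐ` together with pinning-gain vectors `d¹,…,dᵐ` are
jointly connected with the leader, then `∑ k (Lᵏ + Dᵏ)` is positive definite. -/
theorem stmt0 {N m : ℕ} (A : Fin m → Matrix (Fin N) (Fin N) ℝ)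
    (d : Fin m → Fin N → ℝ)
    (hA : ∀ k, IsWeightedAdjMatrix (A k)) (hd : ∀ k i, 0 ≤ d k i)
    (hconn : (leaderGraph A d).Connected) :
    (∑ k, (lap (A k) + Matrix.diagonal (d k))).PosDef := by
  have hM : ∑ k, (lap (A k) + Matrix.diagonal (d k)) =
      lap (∑ k, A k) + Matrix.diagonal (fun i => ∑ k, d k i) := by
    ext i j
    by_cases hij : i = j
    · subst hij
      simp only [lap, Matrix.sum_apply, Matrix.add_apply, Matrix.sub_apply,
        Matrix.diagonal_apply_eq, Finset.sum_add_distrib, Finset.sum_sub_distrib]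
      rw [Finset.sum_comm]
    · simp [lap, Matrix.sum_apply, Matrix.diagonal_apply_ne _ hij]
  have hB : (∑ k, A k).IsSymm := by
    ext i j
    simp only [Matrix.transpose_apply, Matrix.sum_apply]
    exact Finset.sum_congr rfl fun k _ => (hA k).1.apply i j
  have hL : (lap (∑ k, A k) + Matrix.diagonal (fun i => ∑ k, d k i)).IsSymm :=
    ((Matrix.isSymm_diagonal _).sub hB).add (Matrix.isSymm_diagonal _)
  rw [hM]
  refine Matrix.PosDef.of_dotProduct_mulVec_pos ?_ fun x hx => ?_
  · rw [Matrix.IsHermitian, Matrix.conjTranspose_eq_transpose_of_trivial]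
    exact hL
  · rw [star_trivial]
    by_contra! hneg
    have hform := two_mul_lap_add_diagonal hB (fun i => ∑ k, d k i) x
    simp only [Matrix.sum_apply] at hform
    refine hx (funext fun i => ?_)
    obtain ⟨w⟩ := hconn.preconnected (some i) none
    have hconst : ∀ {u v : Option (Fin N)}, (leaderGraph A d).Walk u v →
        u.elim 0 x = v.elim 0 x := by
      intro u v w
      induction w with
      | nil => rfl
      | cons huv _ ih =>
        exact (elim_eq_of_adj (fun i j => Finset.sum_nonneg fun k _ => (hA k).2.1 i j)
          (fun i => Finset.sum_nonneg fun k _ => hd k i) (by linarith) huv).trans ih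
    exact hconst w
end

section
/- Let g : [0,∞) → ℝ be uniformly continuous and nonnegative. If there exists ε > 0 such that ∫_t^{t+ε} g(χ) dχ → 0 as t → ∞, then g(t) → 0 as t → ∞. -/
/-! If `g t ≥ η` for some `t ≥ 0`, uniform continuity gives a length `h ≤ ε`, independent of `t`,
such that `g > η / 2` on `[t, t + h]`. Since `g ≥ 0`, the integral of `g` over `[t, t + ε]` is then at
least `h * (η / 2)`, a fixed positive number, which is impossible for large `t`. -/

open Filter

/-- Barbalat-type lemma: if `g : [0,∞) → ℝ` is uniformly continuous and nonnegative, and for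
some `ε > 0` the integral `∫_t^{t+ε} g → 0` as `t → ∞`, then `g(t) → 0` as `t → ∞`. -/
theorem stmt2 (g : ℝ → ℝ) (hg : UniformContinuousOn g (Set.Ici 0))
    (hnonneg : ∀ t, 0 ≤ t → 0 ≤ g t)
    (ε : ℝ) (hε : 0 < ε)
    (hint : Tendsto (fun t => ∫ χ in t..(t + ε), g χ) atTop (nhds 0)) :
    Tendsto g atTop (nhds 0) := by
  rw [Metric.tendsto_atTop] at hint ⊢
  intro η hη
  obtain ⟨δ, hδ, hclose⟩ := Metric.uniformContinuousOn_iff.mp hg (η / 2) (half_pos hη)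
  -- halving `δ` keeps every point of the closed interval `[t, t + h]` strictly within `δ` of `t`
  obtain ⟨h, hh, hhε, hhδ⟩ : ∃ h : ℝ, 0 < h ∧ h ≤ ε ∧ h < δ :=
    ⟨min ε (δ / 2), lt_min hε (half_pos hδ), min_le_left _ _,
      (min_le_right _ _).trans_lt (half_lt_self hδ)⟩
  obtain ⟨T, hT⟩ := hint (h * (η / 2)) (by positivity)
  refine ⟨max T 0, fun t ht => ?_⟩
  have ht0 : 0 ≤ t := (le_max_right _ _).trans ht
  have hsmall := hT t ((le_max_left _ _).trans ht)
  rw [Real.dist_eq, sub_zero] at hsmall ⊢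
  rw [abs_of_nonneg (hnonneg t ht0)]
  by_contra! hlarge
  have hInt : ∀ a b, 0 ≤ a → a ≤ b → IntervalIntegrable g MeasureTheory.volume a b :=
    fun a b ha hab => (hg.continuousOn.mono fun x hx => ha.trans hx.1).intervalIntegrable_of_Icc hab
  have hlower : h * (η / 2) ≤ ∫ χ in t..(t + h), g χ := by
    have hmono : ∫ _ in t..(t + h), η / 2 ≤ ∫ χ in t..(t + h), g χ := by
      refine intervalIntegral.integral_mono_on (by linarith) intervalIntegrable_const
        (hInt _ _ ht0 (by linarith)) fun x hx => ?_
      have hd := hclose t ht0 x (ht0.trans hx.1) (by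
        rw [Real.dist_eq, abs_lt]
        constructor <;> linarith [hx.1, hx.2])
      rw [Real.dist_eq, abs_lt] at hd
      linarith [hd.2]
    rwa [intervalIntegral.integral_const, add_sub_cancel_left, smul_eq_mul] at hmono
  have hrest : 0 ≤ ∫ χ in (t + h)..(t + ε), g χ :=
    intervalIntegral.integral_nonneg (by linarith) fun x hx => hnonneg x (by linarith [hx.1])
  have hsplit := intervalIntegral.integral_add_adjacent_intervals
    (hInt t (t + h) ht0 (by linarith)) (hInt (t + h) (t + ε) (by linarith) (by linarith))
  linarith [le_abs_self (∫ χ in t..(t + ε), g χ)]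
end

section
/- Let h : ℝⁿ → ℝⁿ, and suppose V, q, Ψ witness Assumption 1 for h. Let A ∈ ℝ^{N×N} be a weighted adjacency matrix with Laplacian L, let d ∈ ℝ^N be a pinning-gain vector with D = diag(d), and set G = L + D. Then for any z₁,…,z_N, z_γ ∈ ℝⁿ, the Lyapunov dissipation inequality holds: Σ_{i=1}^{N} ∇V(z_i − z_γ) · [ Σ_{j=1}^{N} A_ij (h(z_j) − h(z_i)) + d_i (h(z_γ) − h(z_i)) ] ≤ −Σ_{i=1}^{N} Σ_{j=1}^{N} G_ij q(z_i − z_γ)ᵀ Ψ q(z_j − z_γ) ≤ 0. -/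
/-!
Write `f i j = ⟪∇V(zᵢ - zγ), h(zⱼ)⟫` and `p i j = q(zᵢ - zγ)ᵀ Ψ q(zⱼ - zγ)`. Symmetrizing in the
two summation indices (`sum_symmetrize`) turns the coupling part of both sides into `-1/2` times a sum
of `A i j` against the second differences `f i i + f j j - f i j - f j i`, and the same for `p`; these
are the two sides of the monotonicity condition at `α = zᵢ`, `β = zⱼ`, `γ = zγ`; since `A` has
nonnegative entries the coupling terms compare. The pinning terms compare by the same condition at
`β = zγ`, because `q 0 = 0` and `∇V(0) = 0`, the origin being a global minimum of `V`. The second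
inequality is nonnegativity of the symmetrized right-hand side, `Ψ` being positive definite.
-/

open Matrix Filter
open scoped RealInnerProductSpace

/-- Assumption 1: `V` is continuously differentiable, positive definite and radially
unbounded, `q` is continuous and vanishes exactly at `0`, `Ψ` is (symmetric) positive
definite, and for all `α β γ`:
`(∇V(α-γ) - ∇V(β-γ)) ⬝ (h α - h β) ≥ (q(α-γ) - q(β-γ))ᵀ Ψ (q(α-γ) - q(β-γ))`. -/
def Assumption1 {n M : ℕ} (h : EuclideanSpace ℝ (Fin n) → EuclideanSpace ℝ (Fin n))
    (V : EuclideanSpace ℝ (Fin n) → ℝ)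
    (q : EuclideanSpace ℝ (Fin n) → (Fin M → ℝ))
    (Ψ : Matrix (Fin M) (Fin M) ℝ) : Prop :=
  ContDiff ℝ 1 V ∧ V 0 = 0 ∧ (∀ x, x ≠ 0 → 0 < V x) ∧
    Tendsto V (cocompact _) atTop ∧
    Continuous q ∧ (∀ α, q α = 0 ↔ α = 0) ∧ Ψ.PosDef ∧
    ∀ α β γ : EuclideanSpace ℝ (Fin n),
      (q (α - γ) - q (β - γ)) ⬝ᵥ Ψ.mulVec (q (α - γ) - q (β - γ)) ≤
        ⟪gradient V (α - γ) - gradient V (β - γ), h α - h β⟫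

/-- The Laplacian quadratic form, symmetrized: for symmetric weights only the second differences
of `f` matter. -/
lemma sum_symmetrize {N : ℕ} (A : Matrix (Fin N) (Fin N) ℝ) (hA : A.IsSymm)
    (f : Fin N → Fin N → ℝ) :
    ∑ i, ∑ j, A i j * (f i j - f i i) =
      -(1 / 2) * ∑ i, ∑ j, A i j * (f i i + f j j - f i j - f j i) := by
  have hswap : ∑ i, ∑ j, A i j * (f i j - f i i) = ∑ i, ∑ j, A i j * (f j i - f j j) := by
    rw [Finset.sum_comm]
    refine Finset.sum_congr rfl fun i _ => Finset.sum_congr rfl fun j _ => ?_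
    rw [hA.apply]
  have hadd : ∑ i, ∑ j, A i j * (f i i + f j j - f i j - f j i) =
      -(∑ i, ∑ j, A i j * (f i j - f i i) + ∑ i, ∑ j, A i j * (f j i - f j j)) := by
    simp only [← Finset.sum_add_distrib, ← Finset.sum_neg_distrib]
    refine Finset.sum_congr rfl fun i _ => Finset.sum_congr rfl fun j _ => ?_
    ring
  rw [hadd, ← hswap]
  ring

lemma sum_lap_add_diagonal {N : ℕ} (A : Matrix (Fin N) (Fin N) ℝ) (d : Fin N → ℝ)
    (p : Fin N → Fin N → ℝ) :
    ∑ i, ∑ j, (lap A + Matrix.diagonal d) i j * p i j =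
      -(∑ i, ∑ j, A i j * (p i j - p i i)) + ∑ i, d i * p i i := by
  rw [← Finset.sum_neg_distrib, ← Finset.sum_add_distrib]
  refine Finset.sum_congr rfl fun i _ => ?_
  simp only [lap, Matrix.add_apply, Matrix.sub_apply, Matrix.diagonal_apply, add_mul, sub_mul,
    ite_mul, zero_mul, Finset.sum_add_distrib, Finset.sum_sub_distrib, Finset.sum_ite_eq,
    Finset.mem_univ, if_true, mul_sub, Finset.sum_mul]
  ring

/-- A function that is positive away from `0` and vanishes there has a minimum at `0`. -/
lemma gradient_zero_of_posDef {n : ℕ} {V : EuclideanSpace ℝ (Fin n) → ℝ} (h0 : V 0 = 0)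
    (hpos : ∀ x, x ≠ 0 → 0 < V x) : gradient V 0 = 0 := by
  have hmin : IsLocalMin V 0 := by
    refine Filter.Eventually.of_forall fun x => ?_
    rcases eq_or_ne x 0 with rfl | hx
    · exact le_rfl
    · exact h0 ▸ (hpos x hx).le
  rw [gradient, hmin.fderiv_eq_zero, map_zero]

/-- Lyapunov dissipation inequality for the first-order protocol under Assumption 1. -/
theorem stmt6 {n M N : ℕ}
    (h : EuclideanSpace ℝ (Fin n) → EuclideanSpace ℝ (Fin n))
    (V : EuclideanSpace ℝ (Fin n) → ℝ)
    (q : EuclideanSpace ℝ (Fin n) → (Fin M → ℝ))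
    (Ψ : Matrix (Fin M) (Fin M) ℝ)
    (hassump : Assumption1 h V q Ψ)
    (A : Matrix (Fin N) (Fin N) ℝ) (hA : IsWeightedAdjMatrix A)
    (d : Fin N → ℝ) (hd : ∀ i, 0 ≤ d i)
    (z : Fin N → EuclideanSpace ℝ (Fin n)) (zγ : EuclideanSpace ℝ (Fin n)) :
    (∑ i, ⟪gradient V (z i - zγ),
        (∑ j, A i j • (h (z j) - h (z i))) + d i • (h zγ - h (z i))⟫) ≤
        -∑ i, ∑ j, (lap A + Matrix.diagonal d) i j *
          (q (z i - zγ) ⬝ᵥ Ψ.mulVec (q (z j - zγ))) ∧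
      -∑ i, ∑ j, (lap A + Matrix.diagonal d) i j *
          (q (z i - zγ) ⬝ᵥ Ψ.mulVec (q (z j - zγ))) ≤ 0 := by
  obtain ⟨-, hV0, hVpos, -, -, hq, hΨ, hmono⟩ := hassump
  obtain ⟨hsymm, hnn, -⟩ := hA
  have hgrad := gradient_zero_of_posDef hV0 hVpos
  have hq0 : q 0 = 0 := (hq 0).2 rfl
  have hΨnn : ∀ x : Fin M → ℝ, 0 ≤ x ⬝ᵥ Ψ.mulVec x := fun x => by
    simpa using hΨ.posSemidef.dotProduct_mulVec_nonneg x
  set f : Fin N → Fin N → ℝ := fun i j => ⟪gradient V (z i - zγ), h (z j)⟫ with hf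
  set p : Fin N → Fin N → ℝ := fun i j => q (z i - zγ) ⬝ᵥ Ψ.mulVec (q (z j - zγ)) with hp
  have hp_diff : ∀ i j, p i i + p j j - p i j - p j i =
      (q (z i - zγ) - q (z j - zγ)) ⬝ᵥ Ψ.mulVec (q (z i - zγ) - q (z j - zγ)) := fun i j => by
    simp only [hp, Matrix.mulVec_sub, sub_dotProduct, dotProduct_sub]
    ring
  have hf_diff : ∀ i j, f i i + f j j - f i j - f j i =
      ⟪gradient V (z i - zγ) - gradient V (z j - zγ), h (z i) - h (z j)⟫ := fun i j => by
    simp only [hf, inner_sub_left, inner_sub_right]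
    ring
  have hpin : ∀ i, p i i ≤ -⟪gradient V (z i - zγ), h zγ - h (z i)⟫ := fun i => by
    have := hmono (z i) zγ zγ
    rw [sub_self, hgrad, hq0, sub_zero, sub_zero] at this
    rwa [← inner_neg_right, neg_sub]
  have hlhs : (∑ i, ⟪gradient V (z i - zγ),
        (∑ j, A i j • (h (z j) - h (z i))) + d i • (h zγ - h (z i))⟫) =
      ∑ i, ∑ j, A i j * (f i j - f i i) +
        ∑ i, d i * ⟪gradient V (z i - zγ), h zγ - h (z i)⟫ := by
    simp only [hf, inner_add_right, inner_sum, real_inner_smul_right, ← inner_sub_right,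
      Finset.sum_add_distrib]
  have hrhs := sum_lap_add_diagonal A d p
  have hcouple : ∑ i, ∑ j, A i j * (p i i + p j j - p i j - p j i) ≤
      ∑ i, ∑ j, A i j * (f i i + f j j - f i j - f j i) :=
    Finset.sum_le_sum fun i _ => Finset.sum_le_sum fun j _ =>
      mul_le_mul_of_nonneg_left (by rw [hp_diff, hf_diff]; exact hmono _ _ _) (hnn i j)
  have hpin_sum : ∑ i, d i * p i i ≤
      -∑ i, d i * ⟪gradient V (z i - zγ), h zγ - h (z i)⟫ := by
    rw [← Finset.sum_neg_distrib]
    refine Finset.sum_le_sum fun i _ => ?_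
    rw [← mul_neg]
    exact mul_le_mul_of_nonneg_left (hpin i) (hd i)
  have hcouple_nn : 0 ≤ ∑ i, ∑ j, A i j * (p i i + p j j - p i j - p j i) :=
    Finset.sum_nonneg fun i _ => Finset.sum_nonneg fun j _ =>
      mul_nonneg (hnn i j) (by rw [hp_diff]; exact hΨnn _)
  have hpin_nn : 0 ≤ ∑ i, d i * p i i :=
    Finset.sum_nonneg fun i _ => mul_nonneg (hd i) (hΨnn _)
  rw [sum_symmetrize A hsymm] at hlhs hrhs
  constructor
  · rw [hlhs, hrhs]
    linarith
  · rw [hrhs]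
    linarith
end

section
/- Let h : ℝⁿ → ℝⁿ be continuous and suppose V, q, Ψ witness Assumption 1 for h. Let σ : [0,∞) → {1,…,m} be any switching signal, let A¹,…,Aᵐ be weighted adjacency matrices and d¹,…,dᵐ pinning-gain vectors, and fix z_γ ∈ ℝⁿ. If z₁,…,z_N : [0,∞) → ℝⁿ are differentiable and satisfy ż_i(t) = Σ_{j} A^{σ(t)}_{ij} (h(z_j(t)) − h(z_i(t))) + d^{σ(t)}_i (h(z_γ) − h(z_i(t))) for all t ≥ 0, then the function Ṽ(t) = Σ_{i=1}^{N} V(z_i(t) − z_γ) is nonincreasing on [0,∞). -/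
/-!
The function `Ṽ` is differentiable on `[0, ∞)`, and with `gᵢ = ∇V(zᵢ - z_γ)` its derivative is
`∑ᵢ ⟪gᵢ, ∑ⱼ Aᵢⱼ (h zⱼ - h zᵢ)⟫ + ∑ᵢ dᵢ ⟪gᵢ, h z_γ - h zᵢ⟫`.
Exchanging `i` and `j` and using the symmetry of `A`, the first sum equals
`-(1/2) ∑ᵢⱼ Aᵢⱼ ⟪gᵢ - gⱼ, h zᵢ - h zⱼ⟫`, which is nonpositive by the monotonicity inequality of
Assumption 1 (`sum_inner_diffusive_nonpos`). Since `V` is minimal at `0`, `∇V(0) = 0`, so the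
same inequality with `β = γ = z_γ` makes the pinning terms nonpositive. The mean value theorem only
needs the sign of the derivative at each time, so no regularity of the switching signal is used.
-/

open Matrix Filter
open scoped RealInnerProductSpace

/-- Symmetric nonnegative diffusive coupling dissipates. The left side is `-∑ᵢⱼ Lᵢⱼ ⟪gᵢ, yⱼ⟫` with `L`
the Laplacian of `A`; pairing the terms `(i, j)` and `(j, i)` exhibits its sign. -/
theorem sum_inner_diffusive_nonpos {E : Type*} [NormedAddCommGroup E] [InnerProductSpace ℝ E]
    {N : ℕ} {A : Matrix (Fin N) (Fin N) ℝ} (hA : IsWeightedAdjMatrix A) (g y : Fin N → E)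
    (hgy : ∀ i j, 0 ≤ ⟪g i - g j, y i - y j⟫) :
    ∑ i, ⟪g i, ∑ j, A i j • (y j - y i)⟫ ≤ 0 := by
  have h1 : ∑ i, ⟪g i, ∑ j, A i j • (y j - y i)⟫ = ∑ i, ∑ j, A i j * ⟪g i, y j - y i⟫ := by
    simp only [inner_sum, inner_smul_right]
  have h2 : ∑ i, ∑ j, A i j * ⟪g i, y j - y i⟫ = ∑ i, ∑ j, A i j * ⟪g j, y i - y j⟫ := by
    rw [Finset.sum_comm]
    refine Finset.sum_congr rfl fun i _ => Finset.sum_congr rfl fun j _ => ?_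
    rw [hA.1.apply i j]
  have h3 : ∑ i, ∑ j, A i j * ⟪g i, y j - y i⟫ + ∑ i, ∑ j, A i j * ⟪g j, y i - y j⟫ ≤ 0 := by
    rw [← Finset.sum_add_distrib]
    refine Finset.sum_nonpos fun i _ => ?_
    rw [← Finset.sum_add_distrib]
    refine Finset.sum_nonpos fun j _ => ?_
    have h4 := mul_nonneg (hA.2.1 i j) (hgy i j)
    simp only [inner_sub_left, inner_sub_right] at h4 ⊢
    linarith
  linarith

/-- The monotonicity part of Assumption 1, with the positive semidefinite lower bound discarded. -/
theorem Assumption1.inner_nonneg {n M : ℕ}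
    {h : EuclideanSpace ℝ (Fin n) → EuclideanSpace ℝ (Fin n)}
    {V : EuclideanSpace ℝ (Fin n) → ℝ} {q : EuclideanSpace ℝ (Fin n) → (Fin M → ℝ)}
    {Ψ : Matrix (Fin M) (Fin M) ℝ} (H : Assumption1 h V q Ψ) (α β γ : EuclideanSpace ℝ (Fin n)) :
    0 ≤ ⟪gradient V (α - γ) - gradient V (β - γ), h α - h β⟫ := by
  obtain ⟨-, -, -, -, -, -, hΨ, hmono⟩ := H
  refine le_trans ?_ (hmono α β γ)
  simpa using hΨ.posSemidef.dotProduct_mulVec_nonneg (q (α - γ) - q (β - γ))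

theorem Assumption1.gradient_zero {n M : ℕ}
    {h : EuclideanSpace ℝ (Fin n) → EuclideanSpace ℝ (Fin n)}
    {V : EuclideanSpace ℝ (Fin n) → ℝ} {q : EuclideanSpace ℝ (Fin n) → (Fin M → ℝ)}
    {Ψ : Matrix (Fin M) (Fin M) ℝ} (H : Assumption1 h V q Ψ) : gradient V 0 = 0 := by
  have hmin : IsLocalMin V 0 := by
    refine Eventually.of_forall fun x => ?_
    rcases eq_or_ne x 0 with rfl | hx
    · exact le_rfl
    · rw [H.2.1]
      exact (H.2.2.1 x hx).le
  simp [gradient, hmin.fderiv_eq_zero]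

/-- Along any solution of the first-order protocol under an arbitrary switching signal,
the Lyapunov function `Ṽ(t) = ∑ᵢ V(zᵢ(t) - z_γ)` is nonincreasing on `[0, ∞)`. -/
theorem stmt7 {n M N m : ℕ}
    (h : EuclideanSpace ℝ (Fin n) → EuclideanSpace ℝ (Fin n)) (hcont : Continuous h)
    (V : EuclideanSpace ℝ (Fin n) → ℝ)
    (q : EuclideanSpace ℝ (Fin n) → (Fin M → ℝ))
    (Ψ : Matrix (Fin M) (Fin M) ℝ)
    (hassump : Assumption1 h V q Ψ)
    (σ : ℝ → Fin m)
    (A : Fin m → Matrix (Fin N) (Fin N) ℝ) (hA : ∀ k, IsWeightedAdjMatrix (A k))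
    (d : Fin m → Fin N → ℝ) (hd : ∀ k i, 0 ≤ d k i)
    (zγ : EuclideanSpace ℝ (Fin n))
    (z : Fin N → ℝ → EuclideanSpace ℝ (Fin n))
    (hz : ∀ i, ∀ t, 0 ≤ t → HasDerivAt (z i)
        ((∑ j, A (σ t) i j • (h (z j t) - h (z i t))) + d (σ t) i • (h zγ - h (z i t))) t) :
    AntitoneOn (fun t => ∑ i, V (z i t - zγ)) (Set.Ici 0) := by
  have hV : Differentiable ℝ V := hassump.1.differentiable one_ne_zero
  have hderiv : ∀ t, 0 ≤ t → HasDerivAt (fun t => ∑ i, V (z i t - zγ))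
      (∑ i, ⟪gradient V (z i t - zγ),
        (∑ j, A (σ t) i j • (h (z j t) - h (z i t))) + d (σ t) i • (h zγ - h (z i t))⟫) t := by
    intro t ht
    refine HasDerivAt.fun_sum fun i _ => ?_
    have hg := (hV (z i t - zγ)).hasGradientAt.hasFDerivAt
    simpa [Function.comp_def] using hg.comp_hasDerivAt t ((hz i t ht).sub_const zγ)
  refine antitoneOn_of_deriv_nonpos (convex_Ici 0)
    (fun t ht => (hderiv t ht).continuousAt.continuousWithinAt)
    (fun t ht => (hderiv t (interior_subset ht)).differentiableAt.differentiableWithinAt)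
    fun t ht => ?_
  rw [(hderiv t (interior_subset ht)).deriv]
  simp only [inner_add_right, Finset.sum_add_distrib]
  refine add_nonpos ?_ (Finset.sum_nonpos fun i _ => ?_)
  · exact sum_inner_diffusive_nonpos (hA (σ t)) (fun i => gradient V (z i t - zγ))
      (fun i => h (z i t)) fun i j => hassump.inner_nonneg (z i t) (z j t) zγ
  · have hp := hassump.inner_nonneg (z i t) zγ zγ
    rw [sub_self, hassump.gradient_zero, sub_zero] at hp
    rw [← neg_sub (h (z i t)), inner_smul_right, inner_neg_right]
    exact mul_nonpos_of_nonneg_of_nonpos (hd (σ t) i) (neg_nonpos.2 hp)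
end

section
/- (Theorem 1) Let h : ℝⁿ → ℝⁿ be a polynomial map for which Assumption 1 holds. Let σ : [0,∞) → {1,…,m} be a switching signal with dwell time τ > 0 on bounded intervals, with interval sequence (t_κ). Let A¹,…,Aᵐ be weighted adjacency matrices and d¹,…,dᵐ pinning-gain vectors, and assume that for every κ the collection of adjacency matrices A^{σ(s)} and pinning-gain vectors d^{σ(s)}, for s ranging over [t_κ, t_{κ+1}), is jointly connected with the leader. Fix z_γ ∈ ℝⁿ. Then every family of differentiable functions z₁,…,z_N : [0,∞) → ℝⁿ satisfying ż_i(t) = Σ_j A^{σ(t)}_{ij} (h(z_j(t)) − h(z_i(t))) + d^{σ(t)}_i (h(z_γ) − h(z_i(t))) for all t ≥ 0 achieves consensus: z_i(t) → z_γ as t → ∞ for every i ∈ {1,…,N}. -/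
/-!
The proof combines a Lyapunov function with a compactness argument along an ultrafilter.

In error coordinates `x i = z i - zγ`, with `f y = h (y + zγ) - h zγ`, the energy `∑ i, V (x i)` has
derivative minus `diss`, a weighted sum over the active edges of
`⟪∇V (x i) - ∇V (x j), f (x i) - f (x j)⟫`, the leader counting as an agent at `0`. The dissipation
inequality makes every term nonnegative. So the energy decreases to a limit, trajectories are
bounded because `V` is radially unbounded, and since the energy loss tends to `0`, every limit of
states sampled at either end of the dwell intervals of a topology `k` has zero dissipation
for `k` (`ErrFlow.diss_limit_eq_zero`).

Zero dissipation on an edge gives `q (x i) = q (x j)`. As `q` need not be injective, this does not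
give `x i = x j`, but it does give `x i = 0 ↔ x j = 0`. Hence the set of agents that are at the
leader in the limit is a union of components of the topology `k`. As `f` is Lipschitz on bounded
sets, a two-sided Grönwall estimate on these components (`ErrFlow.exists_gronwall`) shows that this
set is the same at both ends of a dwell interval (`ErrFlow.limit_step`).

The number of dwell intervals in `[t κ, t (κ + 1))` is at most `T / τ`, so along an ultrafilter
on the `κ` this number, the sequence of topologies and all limit states can be fixed. The set of
agents at the leader is then the same throughout the interval and is closed under the edges of the
connected union graph, so it contains every agent. The energy thus tends to `0` along the
ultrafilter, hence, being monotone, as `t → ∞`.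
-/

open Matrix Filter
open scoped RealInnerProductSpace

/-- A polynomial map `ℝⁿ → ℝⁿ`: each coordinate is given by a real multivariate polynomial. -/
def IsPolynomialMap {n M : ℕ} (h : EuclideanSpace ℝ (Fin n) → (Fin M → ℝ)) : Prop :=
  ∃ p : Fin M → MvPolynomial (Fin n) ℝ,
    ∀ x i, h x i = MvPolynomial.eval (fun j => x j) (p i)

/-- The union graph over a set `S` of topology indices: vertex `none` is the leader and
`some i` are the followers; distinct followers `i, j` are adjacent whenever `A k i j > 0` for
some `k ∈ S`, and the leader is adjacent to follower `i` whenever `d k i > 0` for some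
`k ∈ S`. Joint connectedness with the leader is connectedness of this graph. -/
def jointLeaderGraph {N m : ℕ} (A : Fin m → Matrix (Fin N) (Fin N) ℝ)
    (d : Fin m → Fin N → ℝ) (S : Set (Fin m)) : SimpleGraph (Option (Fin N)) :=
  SimpleGraph.fromRel (fun x y =>
    match x, y with
    | some i, some j => ∃ k ∈ S, 0 < A k i j
    | some i, none => ∃ k ∈ S, 0 < d k i
    | none, _ => False)

/-- `σ` is a switching signal with dwell time `τ` on the bounded intervals `[t κ, t (κ+1))`:
the intervals have length at most `T`, and each of them is partitioned into finitely many
contiguous subintervals of length at least `τ` on each of which `σ` is constant. -/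
def IsDwellSwitching {m : ℕ} (σ : ℝ → Fin m) (τ T : ℝ) (t : ℕ → ℝ) : Prop :=
  0 < τ ∧ 0 < T ∧ t 0 = 0 ∧ StrictMono t ∧ (∀ κ, t (κ + 1) - t κ ≤ T) ∧
    ∀ κ, ∃ (s : ℕ) (u : ℕ → ℝ), 0 < s ∧ u 0 = t κ ∧ u s = t (κ + 1) ∧
      (∀ l < s, τ ≤ u (l + 1) - u l) ∧
      (∀ l < s, ∀ x ∈ Set.Ico (u l) (u (l + 1)), ∀ y ∈ Set.Ico (u l) (u (l + 1)), σ x = σ y)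

/-! ### Error dynamics and dissipation -/

/-- The follower dynamics in error coordinates (leader at `0`): the velocity of agent `i` under
the weights `a`, the pinning gains `b` and the coupling map `f`. -/
def errField {E : Type*} [AddCommGroup E] [Module ℝ E] {N : ℕ} (f : E → E)
    (a : Matrix (Fin N) (Fin N) ℝ) (b : Fin N → ℝ) (X : Fin N → E) (i : Fin N) : E :=
  ∑ j, a i j • (f (X j) - f (X i)) - b i • f (X i)

/-- The dissipation rate of `∑ i, V (X i)` along `errField`, where `g` is the gradient of `V`. -/
noncomputable def diss {E : Type*} [NormedAddCommGroup E] [InnerProductSpace ℝ E] {N : ℕ}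
    (g f : E → E) (a : Matrix (Fin N) (Fin N) ℝ) (b : Fin N → ℝ) (X : Fin N → E) : ℝ :=
  1 / 2 * ∑ i, ∑ j, a i j * ⟪g (X i) - g (X j), f (X i) - f (X j)⟫
    + ∑ i, b i * ⟪g (X i), f (X i)⟫

/-- A solution `x` of the switched error dynamics on `[0, ∞)`, together with a potential `V` with
gradient `g`. The fields `edge_nonneg` and `edge_eq` are what the dissipation inequality is used
for: the edge terms of `diss` are nonnegative, and the vanishing of one forces its two endpoints
to be at the leader simultaneously. -/
structure ErrFlow {E : Type*} [NormedAddCommGroup E] [InnerProductSpace ℝ E] [CompleteSpace E]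
    {N m : ℕ} (V : E → ℝ) (g f : E → E) (A : Fin m → Matrix (Fin N) (Fin N) ℝ)
    (d : Fin m → Fin N → ℝ) (σ : ℝ → Fin m) (x : ℝ → Fin N → E) : Prop where
  symm : ∀ k i j, A k i j = A k j i
  A_nonneg : ∀ k i j, 0 ≤ A k i j
  d_nonneg : ∀ k i, 0 ≤ d k i
  ode : ∀ s, 0 ≤ s → ∀ i, HasDerivAt (fun r => x r i) (errField f (A (σ s)) (d (σ s)) (x s) i) s
  grad : ∀ y, HasGradientAt V (g y) y
  V_zero : V 0 = 0
  V_pos : ∀ y, y ≠ 0 → 0 < V y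
  V_coercive : Tendsto V (cocompact E) atTop
  g_cont : Continuous g
  f_cont : Continuous f
  f_lip : ∀ R : ℝ, ∃ L : ℝ, 0 ≤ L ∧ ∀ y, ‖y‖ ≤ R → ‖f y‖ ≤ L * ‖y‖
  g_zero : g 0 = 0
  f_zero : f 0 = 0
  edge_nonneg : ∀ y w, 0 ≤ ⟪g y - g w, f y - f w⟫
  edge_eq : ∀ y w, ⟪g y - g w, f y - f w⟫ = 0 → (y = 0 ↔ w = 0)

/-- Summation by parts over the symmetric edge set. -/
lemma sum_inner_errField {E : Type*} [NormedAddCommGroup E] [InnerProductSpace ℝ E] {N : ℕ}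
    (g f : E → E) (a : Matrix (Fin N) (Fin N) ℝ) (b : Fin N → ℝ) (X : Fin N → E)
    (ha : ∀ i j, a i j = a j i) :
    ∑ i, ⟪g (X i), errField f a b X i⟫ = - diss g f a b X := by
  have h1 : ∑ i, ∑ j, a i j * ⟪g (X i), f (X j) - f (X i)⟫
      = ∑ i, ∑ j, a i j * ⟪g (X j), f (X i) - f (X j)⟫ := by
    rw [Finset.sum_comm]
    exact Finset.sum_congr rfl fun i _ => Finset.sum_congr rfl fun j _ => by rw [ha]
  have h2 : ∑ i, ∑ j, a i j * ⟪g (X i) - g (X j), f (X i) - f (X j)⟫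
      = - (∑ i, ∑ j, a i j * ⟪g (X i), f (X j) - f (X i)⟫
        + ∑ i, ∑ j, a i j * ⟪g (X j), f (X i) - f (X j)⟫) := by
    simp only [← Finset.sum_add_distrib, ← Finset.sum_neg_distrib]
    refine Finset.sum_congr rfl fun i _ => Finset.sum_congr rfl fun j _ => ?_
    simp only [inner_sub_left, inner_sub_right]; ring
  have h3 : ∑ i, ⟪g (X i), errField f a b X i⟫
      = ∑ i, ∑ j, a i j * ⟪g (X i), f (X j) - f (X i)⟫ - ∑ i, b i * ⟪g (X i), f (X i)⟫ := by
    rw [← Finset.sum_sub_distrib]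
    refine Finset.sum_congr rfl fun i _ => ?_
    simp only [errField, inner_sub_right (g (X i)) (∑ j, _), inner_sum, real_inner_smul_right]
  rw [h3, diss, h2, ← h1]; ring

namespace ErrFlow

variable {E : Type*} [NormedAddCommGroup E] [InnerProductSpace ℝ E] [CompleteSpace E]
  {N m : ℕ} {V : E → ℝ} {g f : E → E} {A : Fin m → Matrix (Fin N) (Fin N) ℝ}
  {d : Fin m → Fin N → ℝ} {σ : ℝ → Fin m} {x : ℝ → Fin N → E}

lemma node_nonneg (H : ErrFlow V g f A d σ x) (y : E) : 0 ≤ ⟪g y, f y⟫ := by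
  simpa [H.g_zero, H.f_zero] using H.edge_nonneg y 0

lemma diss_nonneg (H : ErrFlow V g f A d σ x) (k : Fin m) (X : Fin N → E) :
    0 ≤ diss g f (A k) (d k) X := by
  unfold diss
  have h1 : 0 ≤ ∑ i, ∑ j, A k i j * ⟪g (X i) - g (X j), f (X i) - f (X j)⟫ :=
    Finset.sum_nonneg fun i _ => Finset.sum_nonneg fun j _ =>
      mul_nonneg (H.A_nonneg k i j) (H.edge_nonneg _ _)
  have h2 : 0 ≤ ∑ i, d k i * ⟪g (X i), f (X i)⟫ :=
    Finset.sum_nonneg fun i _ => mul_nonneg (H.d_nonneg k i) (H.node_nonneg _)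
  linarith

/-- Where the dissipation vanishes, adjacent agents are at the leader simultaneously and pinned
agents are at the leader. -/
lemma of_diss_eq_zero (H : ErrFlow V g f A d σ x) (k : Fin m) (X : Fin N → E)
    (h0 : diss g f (A k) (d k) X = 0) :
    (∀ i j, 0 < A k i j → (X i = 0 ↔ X j = 0)) ∧ ∀ i, 0 < d k i → X i = 0 := by
  unfold diss at h0
  have p1 : ∀ i j, 0 ≤ A k i j * ⟪g (X i) - g (X j), f (X i) - f (X j)⟫ := fun i j =>
    mul_nonneg (H.A_nonneg k i j) (H.edge_nonneg _ _)
  have p2 : ∀ i, 0 ≤ d k i * ⟪g (X i), f (X i)⟫ := fun i =>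
    mul_nonneg (H.d_nonneg k i) (H.node_nonneg _)
  have h1 := Finset.sum_nonneg fun i (_ : i ∈ Finset.univ) =>
    Finset.sum_nonneg fun j (_ : j ∈ Finset.univ) => p1 i j
  have h2 := Finset.sum_nonneg fun i (_ : i ∈ Finset.univ) => p2 i
  have e1 : ∑ i, ∑ j, A k i j * ⟪g (X i) - g (X j), f (X i) - f (X j)⟫ = 0 := by linarith
  have e2 : ∑ i, d k i * ⟪g (X i), f (X i)⟫ = 0 := by linarith
  constructor
  · intro i j hij
    rw [Finset.sum_eq_zero_iff_of_nonneg (fun i _ => Finset.sum_nonneg fun j _ => p1 i j)] at e1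
    have e3 := e1 i (Finset.mem_univ _)
    rw [Finset.sum_eq_zero_iff_of_nonneg (fun j _ => p1 i j)] at e3
    exact H.edge_eq _ _ ((mul_eq_zero.mp (e3 j (Finset.mem_univ _))).resolve_left hij.ne')
  · intro i hi
    rw [Finset.sum_eq_zero_iff_of_nonneg (fun i _ => p2 i)] at e2
    have e3 := (mul_eq_zero.mp (e2 i (Finset.mem_univ _))).resolve_left hi.ne'
    exact (H.edge_eq (X i) 0 (by simpa [H.g_zero, H.f_zero] using e3)).2 rfl

lemma continuous_diss (H : ErrFlow V g f A d σ x) (k : Fin m) :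
    Continuous (diss (N := N) g f (A k) (d k)) := by
  have hg := H.g_cont
  have hf := H.f_cont
  unfold diss
  fun_prop

lemma continuous_errField (H : ErrFlow V g f A d σ x) (k : Fin m) (i : Fin N) :
    Continuous fun X => errField f (A k) (d k) X i := by
  have hf := H.f_cont
  unfold errField
  fun_prop

/-! ### Energy decay and boundedness -/

lemma V_cont (H : ErrFlow V g f A d σ x) : Continuous V :=
  continuous_iff_continuousAt.2 fun y => (H.grad y).continuousAt

lemma V_nonneg (H : ErrFlow V g f A d σ x) (y : E) : 0 ≤ V y := by
  by_cases h : y = 0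
  · rw [h, H.V_zero]
  · exact (H.V_pos y h).le

lemma hasDerivAt_energy (H : ErrFlow V g f A d σ x) {s : ℝ} (hs : 0 ≤ s) :
    HasDerivAt (fun r => ∑ i, V (x r i)) (- diss g f (A (σ s)) (d (σ s)) (x s)) s := by
  rw [← sum_inner_errField _ _ _ _ _ (H.symm _)]
  refine HasDerivAt.fun_sum fun i _ => ?_
  exact (H.grad (x s i)).hasFDerivAt.comp_hasDerivAt s (H.ode s hs i)

lemma antitoneOn_energy (H : ErrFlow V g f A d σ x) :
    AntitoneOn (fun r => ∑ i, V (x r i)) (Set.Ici 0) := by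
  refine antitoneOn_of_deriv_nonpos (convex_Ici 0)
    (fun s hs => (H.hasDerivAt_energy hs).continuousAt.continuousWithinAt) ?_ ?_
  · intro s hs
    exact (H.hasDerivAt_energy (interior_subset hs)).differentiableAt.differentiableWithinAt
  · intro s hs
    rw [(H.hasDerivAt_energy (interior_subset hs)).deriv]
    simpa using H.diss_nonneg _ _

lemma exists_tendsto_energy (H : ErrFlow V g f A d σ x) :
    ∃ w, Tendsto (fun r => ∑ i, V (x r i)) atTop (nhds w) := by
  have h1 : Antitone fun r => ∑ i, V (x (max r 0) i) := fun r s hrs =>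
    H.antitoneOn_energy (Set.mem_Ici.2 (le_max_right _ _)) (Set.mem_Ici.2 (le_max_right _ _))
      (max_le_max_right 0 hrs)
  have h2 : BddBelow (Set.range fun r => ∑ i, V (x (max r 0) i)) :=
    ⟨0, by rintro _ ⟨r, rfl⟩; exact Finset.sum_nonneg fun i _ => H.V_nonneg _⟩
  refine ⟨_, (tendsto_atTop_ciInf h1 h2).congr' ?_⟩
  filter_upwards [eventually_ge_atTop 0] with r hr
  rw [max_eq_left hr]

/-- Trajectories stay in a sublevel set of the energy, which is bounded. -/
lemma exists_bound (H : ErrFlow V g f A d σ x) :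
    ∃ R : ℝ, 0 ≤ R ∧ ∀ s, 0 ≤ s → ∀ i, ‖x s i‖ ≤ R := by
  have h1 := H.V_coercive.eventually (eventually_gt_atTop (∑ i, V (x 0 i)))
  rw [Filter.Eventually, mem_cocompact] at h1
  obtain ⟨K, hK, hsub⟩ := h1
  obtain ⟨R, hR⟩ := hK.isBounded.exists_norm_le
  refine ⟨max R 0, le_max_right _ _, fun s hs i => le_max_of_le_left (hR _ ?_)⟩
  by_contra hn
  have h2 : ∑ i, V (x 0 i) < V (x s i) := hsub hn
  have h3 : ∑ i, V (x s i) ≤ ∑ i, V (x 0 i) := H.antitoneOn_energy (Set.mem_Ici.2 le_rfl) hs hs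
  have h4 := Finset.single_le_sum (fun i _ => H.V_nonneg (x s i)) (Finset.mem_univ i)
  linarith

/-! ### Grönwall estimate on components -/

/-- Two-sided Grönwall estimate for a union `C` of components of the topology `k`: the squared
distance of `C` from the leader changes at most exponentially, forwards and backwards in time. -/
lemma exists_gronwall (H : ErrFlow V g f A d σ x) (k : Fin m) (C : Finset (Fin N))
    (hC : ∀ i j, 0 < A k i j → (i ∈ C ↔ j ∈ C)) :
    ∃ L : ℝ, 0 ≤ L ∧ ∀ a b, 0 ≤ a → a ≤ b → (∀ s ∈ Set.Ioo a b, σ s = k) →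
      (∑ i ∈ C, ‖x b i‖ ^ 2 ≤ (∑ i ∈ C, ‖x a i‖ ^ 2) * Real.exp (L * (b - a))) ∧
      (∑ i ∈ C, ‖x a i‖ ^ 2 ≤ (∑ i ∈ C, ‖x b i‖ ^ 2) * Real.exp (L * (b - a))) := by
  obtain ⟨R, hR, hb⟩ := H.exists_bound
  obtain ⟨K, hK, hfK⟩ := H.f_lip R
  have hA := H.A_nonneg
  have hd := H.d_nonneg
  set L := ∑ i ∈ C, 2 * (∑ j, A k i j * (2 * K) + d k i * K) with hL
  have hL0 : 0 ≤ L := Finset.sum_nonneg fun i _ => by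
    have := Finset.sum_nonneg fun j (_ : j ∈ Finset.univ) =>
      mul_nonneg (hA k i j) (show 0 ≤ 2 * K by positivity)
    have := mul_nonneg (hd k i) hK
    linarith
  refine ⟨L, hL0, fun a b ha hab hσ => ?_⟩
  set φ : ℝ → ℝ := fun s => ∑ i ∈ C, ‖x s i‖ ^ 2 with hφ
  set φ' : ℝ → ℝ := fun s => ∑ i ∈ C, 2 * ⟪x s i, errField f (A (σ s)) (d (σ s)) (x s) i⟫ with hφ'
  have hder : ∀ s, 0 ≤ s → HasDerivAt φ (φ' s) s := fun s hs =>
    HasDerivAt.fun_sum fun i _ => (H.ode s hs i).norm_sq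
  have hbound : ∀ s ∈ Set.Ioo a b, |φ' s| ≤ L * φ s := by
    intro s hs
    have hs0 : 0 ≤ s := ha.trans hs.1.le
    have hsq : ∀ i ∈ C, ‖x s i‖ ^ 2 ≤ φ s := fun i hi =>
      Finset.single_le_sum (f := fun i => ‖x s i‖ ^ 2) (fun i _ => by positivity) hi
    have hmul : ∀ i ∈ C, ∀ j ∈ C, ‖x s i‖ * ‖f (x s j)‖ ≤ K * φ s := by
      intro i hi j hj
      have h1 := hfK _ (hb s hs0 j)
      have h2 : ‖x s i‖ * ‖x s j‖ ≤ φ s := by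
        nlinarith [hsq i hi, hsq j hj, sq_nonneg (‖x s i‖ - ‖x s j‖)]
      calc ‖x s i‖ * ‖f (x s j)‖ ≤ ‖x s i‖ * (K * ‖x s j‖) := by gcongr
        _ = K * (‖x s i‖ * ‖x s j‖) := by ring
        _ ≤ K * φ s := by gcongr
    simp only [hφ', hσ s hs]
    rw [hL, Finset.sum_mul]
    refine (Finset.abs_sum_le_sum_abs _ _).trans (Finset.sum_le_sum fun i hi => ?_)
    rw [abs_mul, abs_two, mul_assoc]
    refine mul_le_mul_of_nonneg_left ?_ zero_le_two
    rw [errField, inner_sub_right, inner_sum, add_mul, Finset.sum_mul]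
    refine (abs_sub _ _).trans (add_le_add ?_ ?_)
    · refine (Finset.abs_sum_le_sum_abs _ _).trans (Finset.sum_le_sum fun j _ => ?_)
      rw [real_inner_smul_right, abs_mul, abs_of_nonneg (hA k i j), mul_assoc]
      rcases (hA k i j).eq_or_lt with h0 | h0
      · simp [← h0]
      · have hj := (hC i j h0).1 hi
        refine mul_le_mul_of_nonneg_left ?_ (hA k i j)
        calc |⟪x s i, f (x s j) - f (x s i)⟫| ≤ ‖x s i‖ * ‖f (x s j) - f (x s i)‖ :=
              abs_real_inner_le_norm _ _
          _ ≤ ‖x s i‖ * (‖f (x s j)‖ + ‖f (x s i)‖) := by gcongr; exact norm_sub_le _ _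
          _ ≤ 2 * K * φ s := by linarith [hmul i hi j hj, hmul i hi i hi]
    · rw [real_inner_smul_right, abs_mul, abs_of_nonneg (hd k i), mul_assoc]
      exact mul_le_mul_of_nonneg_left
        ((abs_real_inner_le_norm _ _).trans (hmul i hi i hi)) (hd k i)
  have hexp : ∀ c s : ℝ, 0 ≤ s → HasDerivAt (fun r => φ r * Real.exp (c * r))
      (φ' s * Real.exp (c * s) + φ s * (Real.exp (c * s) * (c * 1))) s := fun c s hs =>
    (hder s hs).mul (((hasDerivAt_id s).const_mul c).exp)
  have hpos : ∀ s ∈ interior (Set.Icc a b), 0 ≤ s := fun s hs => ha.trans (interior_subset hs).1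
  constructor
  · have h1 := antitoneOn_of_deriv_nonpos (convex_Icc a b)
      (f := fun r => φ r * Real.exp (-L * r))
      (fun s hs => (hexp (-L) s (ha.trans hs.1)).continuousAt.continuousWithinAt)
      (fun s hs => (hexp (-L) s (hpos s hs)).differentiableAt.differentiableWithinAt)
      (fun s hs => by
        rw [(hexp (-L) s (hpos s hs)).deriv]
        rw [interior_Icc] at hs
        nlinarith [Real.exp_pos (-L * s), (abs_le.1 (hbound s hs)).2])
      ⟨le_rfl, hab⟩ ⟨hab, le_rfl⟩ hab
    have e1 : Real.exp (L * (b - a)) = Real.exp (-L * a) * Real.exp (L * b) := by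
      rw [← Real.exp_add]; ring_nf
    have e2 : Real.exp (-L * b) * Real.exp (L * b) = 1 := by
      rw [← Real.exp_add]; ring_nf; exact Real.exp_zero
    calc φ b = φ b * Real.exp (-L * b) * Real.exp (L * b) := by rw [mul_assoc, e2, mul_one]
      _ ≤ φ a * Real.exp (-L * a) * Real.exp (L * b) :=
        mul_le_mul_of_nonneg_right h1 (Real.exp_pos _).le
      _ = φ a * Real.exp (L * (b - a)) := by rw [e1]; ring
  · have h1 := monotoneOn_of_deriv_nonneg (convex_Icc a b)
      (f := fun r => φ r * Real.exp (L * r))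
      (fun s hs => (hexp L s (ha.trans hs.1)).continuousAt.continuousWithinAt)
      (fun s hs => (hexp L s (hpos s hs)).differentiableAt.differentiableWithinAt)
      (fun s hs => by
        rw [(hexp L s (hpos s hs)).deriv]
        rw [interior_Icc] at hs
        nlinarith [Real.exp_pos (L * s), (abs_le.1 (hbound s hs)).1])
      ⟨le_rfl, hab⟩ ⟨hab, le_rfl⟩ hab
    have e1 : Real.exp (L * (b - a)) = Real.exp (L * b) * Real.exp (-L * a) := by
      rw [← Real.exp_add]; ring_nf
    have e2 : Real.exp (L * a) * Real.exp (-L * a) = 1 := by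
      rw [← Real.exp_add]; ring_nf; exact Real.exp_zero
    calc φ a = φ a * Real.exp (L * a) * Real.exp (-L * a) := by rw [mul_assoc, e2, mul_one]
      _ ≤ φ b * Real.exp (L * b) * Real.exp (-L * a) :=
        mul_le_mul_of_nonneg_right h1 (Real.exp_pos _).le
      _ = φ b * Real.exp (L * (b - a)) := by rw [e1]; ring

/-! ### Limits of sampled states -/

variable [FiniteDimensional ℝ E]

/-- Velocities under a fixed topology are uniformly bounded. -/
lemma exists_speed (H : ErrFlow V g f A d σ x) (k : Fin m) :
    ∃ B : ℝ, 0 < B ∧ ∀ s, 0 ≤ s → ∀ i, ‖errField f (A k) (d k) (x s) i‖ ≤ B := by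
  obtain ⟨R, hR, hb⟩ := H.exists_bound
  have hc : IsCompact (Metric.closedBall (0 : Fin N → E) R) := isCompact_closedBall _ _
  have h1 : Continuous fun X => fun i => errField f (A k) (d k) X i :=
    continuous_pi fun i => H.continuous_errField k i
  obtain ⟨B, hB⟩ := hc.exists_bound_of_continuousOn h1.continuousOn
  refine ⟨max B 1, by positivity, fun s hs i => le_max_of_le_left ?_⟩
  refine (norm_le_pi_norm (fun i => errField f (A k) (d k) (x s) i) i).trans (hB _ ?_)
  rw [mem_closedBall_zero_iff]
  exact (pi_norm_le_iff_of_nonneg hR).2 (hb s hs)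

/-- Sampling times `p κ → ∞` that lie next to intervals of fixed length on which the topology is
`k`: every limit of the sampled states has zero dissipation for the topology `k`. Otherwise the
energy, which converges, would drop by a fixed amount on infinitely many of these intervals. -/
lemma diss_limit_eq_zero (H : ErrFlow V g f A d σ x) {l : Filter ℕ} [l.NeBot] (k : Fin m)
    {p : ℕ → ℝ} {X : Fin N → E} (hX : Tendsto (fun κ => x (p κ)) l (nhds X))
    {δ₀ : ℝ} (hδ₀ : 0 < δ₀)
    (hc : ∀ δ, 0 < δ → δ ≤ δ₀ → ∃ c : ℕ → ℝ, Tendsto c l atTop ∧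
      ∀ᶠ κ in l, c κ ≤ p κ ∧ p κ ≤ c κ + δ ∧ ∀ s ∈ Set.Ioo (c κ) (c κ + δ), σ s = k) :
    diss g f (A k) (d k) X = 0 := by
  by_contra hne
  have hpos : 0 < diss g f (A k) (d k) X := lt_of_le_of_ne (H.diss_nonneg _ _) (Ne.symm hne)
  set ε := diss g f (A k) (d k) X with hε
  obtain ⟨r, hr, hball⟩ := Metric.eventually_nhds_iff.1
    ((H.continuous_diss k).continuousAt.eventually (lt_mem_nhds (show ε / 2 < ε by linarith)))
  obtain ⟨B, hB, hspeed⟩ := H.exists_speed k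
  set δ := min δ₀ (r / (4 * B)) with hδ
  have hδpos : 0 < δ := lt_min hδ₀ (by positivity)
  have hBδ : B * δ ≤ r / 4 := by
    have : δ ≤ r / (4 * B) := min_le_right _ _
    calc B * δ ≤ B * (r / (4 * B)) := by gcongr
      _ = r / 4 := by field_simp
  obtain ⟨c, hct, hce⟩ := hc δ hδpos (min_le_left _ _)
  obtain ⟨w, hw⟩ := H.exists_tendsto_energy
  have hdrop : ∀ᶠ κ in l, ∑ i, V (x (c κ + δ) i) ≤ ∑ i, V (x (c κ) i) - ε / 2 * δ := by
    filter_upwards [hce, hct.eventually (eventually_ge_atTop 0),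
      hX.eventually (Metric.ball_mem_nhds X (half_pos hr))] with κ h1 h2 h3
    obtain ⟨hcp, hpc, hσ⟩ := h1
    -- on the interval, the state stays within `r` of `X`
    have hlip : ∀ i, ∀ s ∈ Set.Icc (c κ) (c κ + δ), ‖x s i - x (c κ) i‖ ≤ B * δ := by
      intro i s hs
      have hcont : ContinuousOn (fun r => x r i) (Set.Icc (c κ) (c κ + δ)) := fun r hr =>
        (H.ode r (h2.trans hr.1) i).continuousAt.continuousWithinAt
      have h5 : ∀ u, c κ < u → u ≤ s → ‖x s i - x u i‖ ≤ B * (s - u) := by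
        intro u hu hus
        have hcont' : ContinuousOn (fun r => x r i) (Set.Icc u s) := hcont.mono fun r hr =>
          ⟨hu.le.trans hr.1, hr.2.trans hs.2⟩
        refine norm_image_sub_le_of_norm_deriv_right_le_segment (f := fun r => x r i)
          (f' := fun r => errField f (A (σ r)) (d (σ r)) (x r) i) hcont'
          (fun r hr => (H.ode r (by linarith [hr.1]) i).hasDerivWithinAt) ?_ s ⟨hus, le_rfl⟩
        intro r hr
        rw [hσ r ⟨lt_of_lt_of_le hu hr.1, lt_of_lt_of_le hr.2 hs.2⟩]
        exact hspeed r (by linarith [hr.1]) i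
      rcases hs.1.eq_or_lt with h6 | h6
      · rw [← h6]; simp; positivity
      · have h7 : Tendsto (fun u => ‖x s i - x u i‖) (nhdsWithin (c κ) (Set.Ioi (c κ)))
            (nhds ‖x s i - x (c κ) i‖) :=
          ((tendsto_const_nhds.sub (H.ode (c κ) h2 i).continuousAt.tendsto).norm).mono_left
            nhdsWithin_le_nhds
        refine le_of_tendsto h7 ?_
        filter_upwards [Ioc_mem_nhdsGT h6] with u hu
        refine (h5 u hu.1 hu.2).trans ?_
        have : s - u ≤ δ := by linarith [hu.1, hs.2]
        gcongr
    have hnear : ∀ s ∈ Set.Icc (c κ) (c κ + δ), ε / 2 < diss g f (A k) (d k) (x s) := by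
      intro s hs
      refine hball ?_
      have h8 : dist (x s) (x (p κ)) ≤ r / 2 := by
        refine (dist_pi_le_iff (by positivity)).2 fun i => ?_
        have e1 := hlip i s hs
        have e2 := hlip i (p κ) ⟨hcp, hpc⟩
        rw [dist_eq_norm]
        calc ‖x s i - x (p κ) i‖ = ‖(x s i - x (c κ) i) - (x (p κ) i - x (c κ) i)‖ := by
              congr 1; abel
          _ ≤ ‖x s i - x (c κ) i‖ + ‖x (p κ) i - x (c κ) i‖ := norm_sub_le _ _
          _ ≤ r / 2 := by linarith
      have h9 : dist (x (p κ)) X < r / 2 := h3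
      linarith [dist_triangle (x s) (x (p κ)) X]
    have h10 := (convex_Icc (c κ) (c κ + δ)).image_sub_le_mul_sub_of_deriv_le
      (f := fun r => ∑ i, V (x r i)) (C := -(ε / 2))
      (fun s hs => (H.hasDerivAt_energy (h2.trans hs.1)).continuousAt.continuousWithinAt)
      (fun s hs => (H.hasDerivAt_energy
        (h2.trans (interior_subset hs).1)).differentiableAt.differentiableWithinAt)
      (fun s hs => by
        have hs' := interior_subset hs
        rw [interior_Icc] at hs
        rw [(H.hasDerivAt_energy (h2.trans hs'.1)).deriv, hσ s hs]
        linarith [hnear s hs'])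
      (c κ) ⟨le_rfl, by linarith⟩ (c κ + δ) ⟨by linarith, le_rfl⟩ (by linarith)
    have h11 : c κ + δ - c κ = δ := by ring
    rw [h11] at h10
    linarith
  have h1 : Tendsto (fun κ => ∑ i, V (x (c κ) i) - ε / 2 * δ) l (nhds (w - ε / 2 * δ)) :=
    (hw.comp hct).sub_const _
  have h2 : Tendsto (fun κ => ∑ i, V (x (c κ + δ) i)) l (nhds w) :=
    hw.comp (tendsto_atTop_add_const_right _ _ hct)
  have h3 := le_of_tendsto_of_tendsto h2 h1 hdrop
  have : 0 < ε / 2 * δ := by positivity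
  linarith

/-- Along an ultrafilter, sample the states at the two ends of intervals of length in `[τ, T]` on
which the topology is `k`. The agents that are at the leader in the limit are the same at both
ends, and form a union of components of the topology `k` containing all pinned agents. -/
lemma limit_step (H : ErrFlow V g f A d σ x) {l : Filter ℕ} [l.NeBot] (k : Fin m) {τ T : ℝ}
    (hτ : 0 < τ) {a b : ℕ → ℝ} {X Y : Fin N → E}
    (ha : Tendsto a l atTop) (hX : Tendsto (fun κ => x (a κ)) l (nhds X))
    (hY : Tendsto (fun κ => x (b κ)) l (nhds Y))
    (hab : ∀ᶠ κ in l, a κ + τ ≤ b κ ∧ b κ ≤ a κ + T ∧ ∀ s ∈ Set.Ico (a κ) (b κ), σ s = k) :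
    (∀ i j, 0 < A k i j → (X i = 0 ↔ X j = 0)) ∧ (∀ i, 0 < d k i → X i = 0) ∧
      ∀ i, X i = 0 ↔ Y i = 0 := by
  have hb : Tendsto b l atTop := tendsto_atTop_mono' l
    (by filter_upwards [hab] with κ h; linarith [h.1]) ha
  have hXz : diss g f (A k) (d k) X = 0 := by
    refine H.diss_limit_eq_zero k hX hτ fun δ hδ hδτ => ⟨a, ha, ?_⟩
    filter_upwards [hab] with κ h
    exact ⟨le_rfl, by linarith, fun s hs => h.2.2 s ⟨hs.1.le, by linarith [hs.2, h.1]⟩⟩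
  have hYz : diss g f (A k) (d k) Y = 0 := by
    refine H.diss_limit_eq_zero k hY hτ fun δ hδ hδτ => ⟨fun κ => b κ - δ, ?_, ?_⟩
    · exact tendsto_atTop_add_const_right _ (-δ) hb
    filter_upwards [hab] with κ h
    refine ⟨by linarith, by linarith, fun s hs => h.2.2 s ⟨?_, ?_⟩⟩
    · linarith [hs.1, h.1]
    · linarith [hs.2]
  obtain ⟨X1, X2⟩ := H.of_diss_eq_zero k X hXz
  obtain ⟨Y1, -⟩ := H.of_diss_eq_zero k Y hYz
  have hlim : ∀ {p : ℕ → ℝ} {Z : Fin N → E} (C : Finset (Fin N)),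
      Tendsto (fun κ => x (p κ)) l (nhds Z) →
      Tendsto (fun κ => ∑ i ∈ C, ‖x (p κ) i‖ ^ 2) l (nhds (∑ i ∈ C, ‖Z i‖ ^ 2)) :=
    fun C hZ => tendsto_finsetSum C fun i _ => ((tendsto_pi_nhds.1 hZ i).norm).pow 2
  -- a Grönwall bound on `C` transfers convergence to `0` from one end to the other
  have key : ∀ {p r : ℕ → ℝ} {Z W : Fin N → E} (C : Finset (Fin N)) (c : ℝ),
      Tendsto (fun κ => x (p κ)) l (nhds Z) → Tendsto (fun κ => x (r κ)) l (nhds W) →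
      (∀ i ∈ C, Z i = 0) →
      (∀ᶠ κ in l, ∑ i ∈ C, ‖x (r κ) i‖ ^ 2 ≤ (∑ i ∈ C, ‖x (p κ) i‖ ^ 2) * c) →
      ∀ i ∈ C, W i = 0 := by
    intro p r Z W C c hZ hW hZ0 hle i hi
    have h1 := le_of_tendsto_of_tendsto (hlim C hW) ((hlim C hZ).mul_const c) hle
    have h2 : ∑ i ∈ C, ‖Z i‖ ^ 2 = 0 := Finset.sum_eq_zero fun i hi => by simp [hZ0 i hi]
    rw [h2, zero_mul] at h1
    have h3 := Finset.single_le_sum (f := fun i => ‖W i‖ ^ 2) (fun i _ => by positivity) hi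
    have h4 : ‖W i‖ ^ 2 = 0 := le_antisymm (h3.trans h1) (by positivity)
    simpa using h4
  have hex : ∀ (C : Finset (Fin N)) {L a b : ℝ} (Z : Fin N → E), 0 ≤ L → b ≤ a + T →
      (∑ i ∈ C, ‖Z i‖ ^ 2) * Real.exp (L * (b - a))
        ≤ (∑ i ∈ C, ‖Z i‖ ^ 2) * Real.exp (L * T) := by
    intro C L a b Z hL h
    refine mul_le_mul_of_nonneg_left (Real.exp_le_exp.2 ?_)
      (Finset.sum_nonneg fun i _ => by positivity)
    exact mul_le_mul_of_nonneg_left (by linarith) hL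
  refine ⟨X1, X2, fun i => ⟨fun hi => ?_, fun hi => ?_⟩⟩
  · classical
    obtain ⟨L, hL, hG⟩ := H.exists_gronwall k (Finset.univ.filter fun i => X i = 0)
      (by simpa using X1)
    refine key (Finset.univ.filter fun i => X i = 0) (Real.exp (L * T)) hX hY (by simp) ?_ i
      (by simpa using hi)
    filter_upwards [hab, ha.eventually (eventually_ge_atTop 0)] with κ h h0
    exact (hG (a κ) (b κ) h0 (by linarith [h.1]) fun s hs => h.2.2 s ⟨hs.1.le, hs.2⟩).1.trans
      (hex _ (x (a κ)) hL h.2.1)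
  · classical
    obtain ⟨L, hL, hG⟩ := H.exists_gronwall k (Finset.univ.filter fun i => Y i = 0)
      (by simpa using Y1)
    refine key (Finset.univ.filter fun i => Y i = 0) (Real.exp (L * T)) hY hX (by simp) ?_ i
      (by simpa using hi)
    filter_upwards [hab, ha.eventually (eventually_ge_atTop 0)] with κ h h0
    exact (hG (a κ) (b κ) h0 (by linarith [h.1]) fun s hs => h.2.2 s ⟨hs.1.le, hs.2⟩).2.trans
      (hex _ (x (b κ)) hL h.2.1)

/-- Since the energy is monotone, it suffices that the states converge to the leader along some
sequence of times. -/
lemma tendsto_zero_of_sample (H : ErrFlow V g f A d σ x) {l : Filter ℕ} [l.NeBot] {p : ℕ → ℝ}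
    (hp : Tendsto p l atTop) (hx : Tendsto (fun κ => x (p κ)) l (nhds 0)) (i : Fin N) :
    Tendsto (fun s => x s i) atTop (nhds 0) := by
  obtain ⟨w, hw⟩ := H.exists_tendsto_energy
  have h1 : Tendsto (fun κ => ∑ i, V (x (p κ) i)) l (nhds (∑ _i : Fin N, V 0)) :=
    tendsto_finsetSum _ fun i _ => (H.V_cont.tendsto 0).comp (tendsto_pi_nhds.1 hx i)
  have hw0 : w = 0 := by
    rw [tendsto_nhds_unique (hw.comp hp) h1]; simp [H.V_zero]
  rw [hw0] at hw
  have hV : Tendsto (fun s => V (x s i)) atTop (nhds 0) :=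
    squeeze_zero (fun s => H.V_nonneg _)
      (fun s => Finset.single_le_sum (f := fun i => V (x s i)) (fun i _ => H.V_nonneg _)
        (Finset.mem_univ i)) hw
  obtain ⟨R, hR, hb⟩ := H.exists_bound
  refine (isCompact_closedBall (0 : E) R).le_nhds_of_unique_clusterPt ?_ fun y _ hy => ?_
  · rw [Filter.mem_map]
    filter_upwards [eventually_ge_atTop 0] with s hs
    simpa using hb s hs i
  · by_contra hne
    have h2 : MapClusterPt (V y) atTop (fun s => V (x s i)) :=
      MapClusterPt.continuousAt_comp (H.V_cont.continuousAt) hy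
    have h3 : V y = 0 := by
      by_contra hn
      exact (disjoint_nhds_nhds.2 hn).eq_bot.not_gt
        (bot_lt_iff_ne_bot.2 ((h2.clusterPt.mono hV).neBot.ne))
    exact (H.V_pos y hne).ne' h3

/-! ### Consensus -/

/-- Consensus in error coordinates. -/
theorem tendsto_zero (H : ErrFlow V g f A d σ x) {τ T : ℝ} {t : ℕ → ℝ}
    (hσ : IsDwellSwitching σ τ T t)
    (hconn : ∀ κ, (jointLeaderGraph A d
        {k | ∃ s ∈ Set.Ico (t κ) (t (κ + 1)), σ s = k}).Connected) (i : Fin N) :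
    Tendsto (fun s => x s i) atTop (nhds 0) := by
  obtain ⟨hτ, hT, ht0, htm, htT, hdw⟩ := hσ
  choose S u hS hu0 huS hdwell hconst using hdw
  have hstep : ∀ κ a b, a ≤ b → b ≤ S κ → u κ a + (b - a : ℝ) * τ ≤ u κ b := by
    intro κ a b hab
    induction b, hab using Nat.le_induction with
    | base => intro _; simp
    | succ b hab ih =>
      intro hb
      have h1 := ih (by omega)
      have h2 := hdwell κ b (by omega)
      push_cast; linarith
  have hlow : ∀ κ a, a ≤ S κ → t κ ≤ u κ a := by
    intro κ a ha
    have h1 := hstep κ 0 a (Nat.zero_le _) ha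
    rw [hu0] at h1
    have h2 : (0 : ℝ) ≤ a * τ := by positivity
    push_cast at h1; linarith
  have hhigh : ∀ κ a, a ≤ S κ → u κ a ≤ t (κ + 1) := by
    intro κ a ha
    have h1 := hstep κ a (S κ) ha le_rfl
    rw [huS] at h1
    have h2 : (0 : ℝ) ≤ (S κ - a : ℝ) := sub_nonneg.2 (by exact_mod_cast ha)
    nlinarith
  have htlin : ∀ κ : ℕ, κ * τ ≤ t κ := by
    intro κ
    induction κ with
    | zero => simp [ht0]
    | succ κ ih =>
      have h1 := hstep κ 0 1 (Nat.zero_le _) (hS κ)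
      have h2 := hhigh κ 1 (hS κ)
      rw [hu0] at h1
      push_cast at h1 ⊢; linarith
  have htt : Tendsto t atTop atTop :=
    tendsto_atTop_mono htlin (tendsto_natCast_atTop_atTop.atTop_mul_const hτ)
  have hSb : ∀ κ, S κ ≤ ⌈T / τ⌉₊ := by
    intro κ
    have h1 := hstep κ 0 (S κ) (Nat.zero_le _) le_rfl
    rw [hu0, huS] at h1
    have h2 : (S κ : ℝ) ≤ T / τ := by
      rw [le_div_iff₀ hτ]; push_cast at h1; linarith [htT κ]
    exact_mod_cast h2.trans (Nat.le_ceil _)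
  set F : Ultrafilter ℕ := hyperfilter ℕ with hF
  have hFt : (F : Filter ℕ) ≤ atTop := Nat.hyperfilter_le_atTop
  obtain ⟨S₀, -, hS₀⟩ : ∃ a ∈ Set.Iic ⌈T / τ⌉₊, ∀ᶠ κ in F, S κ = a :=
    (Ultrafilter.eventually_exists_mem_iff (P := fun a κ => S κ = a) (Set.finite_Iic _)).1
      (Eventually.of_forall fun κ => ⟨S κ, hSb κ, rfl⟩)
  have hk : ∀ a, ∃ k, ∀ᶠ κ in F, σ (u κ a) = k := fun a =>
    (Ultrafilter.eventually_exists_iff (P := fun k κ => σ (u κ a) = k)).1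
      (Eventually.of_forall fun κ => ⟨_, rfl⟩)
  choose k hk using hk
  obtain ⟨R, hR, hb⟩ := H.exists_bound
  have hX : ∀ a, ∃ X, a ≤ S₀ → Tendsto (fun κ => x (u κ a)) F (nhds X) := by
    intro a
    by_cases ha : a ≤ S₀
    · have h1 : ∀ᶠ κ in F, x (u κ a) ∈ Metric.closedBall (0 : Fin N → E) R := by
        filter_upwards [hS₀] with κ hκ
        rw [mem_closedBall_zero_iff]
        have h2 : 0 ≤ t κ := le_trans (by positivity) (htlin κ)
        exact (pi_norm_le_iff_of_nonneg hR).2 (hb _ (h2.trans (hlow κ a (hκ ▸ ha))))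
      obtain ⟨X, -, hX⟩ := (isCompact_closedBall (0 : Fin N → E) R).ultrafilter_le_nhds
        (F.map fun κ => x (u κ a)) (le_principal_iff.2 h1)
      exact ⟨X, fun _ => hX⟩
    · exact ⟨0, fun h => absurd h ha⟩
  choose X hX using hX
  have hut : ∀ a ≤ S₀, Tendsto (fun κ => u κ a) F atTop := fun a ha =>
    tendsto_atTop_mono' F (by filter_upwards [hS₀] with κ hκ using hlow κ a (hκ ▸ ha))
      (htt.mono_left hFt)
  have hlim : ∀ a < S₀, (∀ i j, 0 < A (k a) i j → (X a i = 0 ↔ X a j = 0)) ∧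
      (∀ i, 0 < d (k a) i → X a i = 0) ∧ ∀ i, X a i = 0 ↔ X (a + 1) i = 0 := by
    intro a ha
    refine H.limit_step (k a) (T := T) hτ (hut a ha.le) (hX a ha.le) (hX (a + 1) ha) ?_
    filter_upwards [hS₀, hk a] with κ h1 h2
    have ha' : a < S κ := h1 ▸ ha
    refine ⟨by linarith [hdwell κ a ha'], ?_, fun s hs => ?_⟩
    · linarith [hlow κ a ha'.le, hhigh κ (a + 1) ha', htT κ]
    · rw [← h2]
      exact hconst κ a ha' s hs _ ⟨le_rfl, by linarith [hdwell κ a ha']⟩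
  have hsame : ∀ a ≤ S₀, ∀ i, X a i = 0 ↔ X 0 i = 0 := by
    intro a
    induction a with
    | zero => intro _ i; rfl
    | succ a ih => intro ha i; rw [← (hlim a ha).2.2 i]; exact ih (by omega) i
  -- one interval whose pieces carry exactly the topologies `k 0, …, k (S₀ - 1)`
  obtain ⟨κ, hκS, hκk⟩ : ∃ κ, S κ = S₀ ∧ ∀ a ∈ Finset.range S₀, σ (u κ a) = k a :=
    (hS₀.and ((Filter.eventually_all_finset _).2 fun a _ => hk a)).exists
  have hcover : ∀ s ∈ Set.Ico (t κ) (t (κ + 1)), ∃ a < S₀, σ s = k a := by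
    intro s hs
    have h1 : ∃ a, s < u κ a := ⟨S κ, by rw [huS]; exact hs.2⟩
    classical
    have h2 := Nat.find_spec h1
    have h3 : Nat.find h1 ≤ S κ := Nat.find_min' h1 (by rw [huS]; exact hs.2)
    have h4 : Nat.find h1 ≠ 0 := by
      intro h0
      rw [h0, hu0] at h2
      exact absurd hs.1 (not_le.2 h2)
    obtain ⟨a, ha⟩ := Nat.exists_eq_succ_of_ne_zero h4
    have h5 : u κ a ≤ s := not_lt.1 (Nat.find_min h1 (by omega))
    rw [ha] at h2 h3
    have haS : a < S κ := h3
    refine ⟨a, hκS ▸ haS, ?_⟩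
    rw [← hκk a (by rw [Finset.mem_range]; omega)]
    exact hconst κ a haS s ⟨h5, h2⟩ _ ⟨le_rfl, by linarith [hdwell κ a haS]⟩
  -- being at the leader propagates along the edges of the union graph
  have hedge : ∀ i j s, s ∈ Set.Ico (t κ) (t (κ + 1)) → 0 < A (σ s) i j →
      (X 0 i = 0 ↔ X 0 j = 0) := by
    intro i j s hs hA
    obtain ⟨a, ha, hsa⟩ := hcover s hs
    rw [hsa] at hA
    rw [← hsame a ha.le i, ← hsame a ha.le j]
    exact (hlim a ha).1 i j hA
  have hpin : ∀ i s, s ∈ Set.Ico (t κ) (t (κ + 1)) → 0 < d (σ s) i → X 0 i = 0 := by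
    intro i s hs hd
    obtain ⟨a, ha, hsa⟩ := hcover s hs
    rw [hsa] at hd
    rw [← hsame a ha.le i]
    exact (hlim a ha).2.1 i hd
  let P : Option (Fin N) → Prop := fun o => ∀ i ∈ o, X 0 i = 0
  have hadj : ∀ v w, (jointLeaderGraph A d
      {k | ∃ s ∈ Set.Ico (t κ) (t (κ + 1)), σ s = k}).Adj v w → P v → P w := by
    intro v w hvw hv
    rw [jointLeaderGraph, SimpleGraph.fromRel_adj] at hvw
    rcases v with _ | i <;> rcases w with _ | j
    · exact hv
    · rcases hvw.2 with h | ⟨_, ⟨s, hs, rfl⟩, h⟩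
      · exact h.elim
      · intro j' hj'
        obtain rfl : j = j' := by simpa using hj'
        exact hpin j s hs h
    · intro j hj
      simp at hj
    · intro j' hj'
      obtain rfl : j = j' := by simpa using hj'
      have hi : X 0 i = 0 := hv i rfl
      rcases hvw.2 with ⟨_, ⟨s, hs, rfl⟩, h⟩ | ⟨_, ⟨s, hs, rfl⟩, h⟩
      · exact (hedge i j s hs h).1 hi
      · exact (hedge j i s hs h).2 hi
  have hall : ∀ v, P v := by
    intro v
    obtain ⟨W⟩ := (hconn κ).preconnected none v
    have hP : ∀ {v w} (_ : (jointLeaderGraph A d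
        {k | ∃ s ∈ Set.Ico (t κ) (t (κ + 1)), σ s = k}).Walk v w), P v → P w := by
      intro v w W
      induction W with
      | nil => exact id
      | cons h _ ih => exact fun hv => ih (hadj _ _ h hv)
    exact hP W (fun i hi => by simp at hi)
  have hX0 : X 0 = 0 := funext fun i => hall (some i) i rfl
  exact H.tendsto_zero_of_sample (hut 0 (Nat.zero_le _)) (hX0 ▸ hX 0 (Nat.zero_le _)) i

end ErrFlow

/-! ### Reduction to error coordinates -/

lemma contDiff_of_isPolynomialMap {n : ℕ}
    {h : EuclideanSpace ℝ (Fin n) → EuclideanSpace ℝ (Fin n)}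
    (hpoly : IsPolynomialMap (fun x => (h x : Fin n → ℝ))) : ContDiff ℝ 1 h := by
  obtain ⟨p, hp⟩ := hpoly
  rw [contDiff_euclidean]
  intro i
  have h1 : (fun x => h x i) = fun x : EuclideanSpace ℝ (Fin n) =>
      MvPolynomial.aeval (fun j => x j) (p i) := by
    funext x
    rw [MvPolynomial.aeval_eq_eval]
    exact hp x i
  rw [h1]
  have h2 : AnalyticOnNhd ℝ (fun x : EuclideanSpace ℝ (Fin n) =>
      MvPolynomial.aeval (fun j => x j) (p i)) Set.univ := by
    refine AnalyticOnNhd.aeval_mvPolynomial (fun j x _ => ?_) (p i)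
    exact (EuclideanSpace.proj (𝕜 := ℝ) j).analyticAt x
  exact contDiffOn_univ.1 (h2.contDiffOn uniqueDiffOn_univ)

/-- Theorem 1: under Assumption 1 and joint connectedness with the leader over each interval
`[t κ, t (κ+1))`, every solution of the first-order protocol achieves consensus:
`zᵢ(t) → z_γ` as `t → ∞` for every agent `i`. -/
theorem stmt8 {n M N m : ℕ}
    (h : EuclideanSpace ℝ (Fin n) → EuclideanSpace ℝ (Fin n))
    (hpoly : IsPolynomialMap (fun x => (h x : Fin n → ℝ)))
    (V : EuclideanSpace ℝ (Fin n) → ℝ)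
    (q : EuclideanSpace ℝ (Fin n) → (Fin M → ℝ))
    (Ψ : Matrix (Fin M) (Fin M) ℝ)
    (hassump : Assumption1 h V q Ψ)
    (σ : ℝ → Fin m) (τ T : ℝ) (t : ℕ → ℝ)
    (hσ : IsDwellSwitching σ τ T t)
    (A : Fin m → Matrix (Fin N) (Fin N) ℝ) (hA : ∀ k, IsWeightedAdjMatrix (A k))
    (d : Fin m → Fin N → ℝ) (hd : ∀ k i, 0 ≤ d k i)
    (hconn : ∀ κ, (jointLeaderGraph A d
        {k | ∃ s ∈ Set.Ico (t κ) (t (κ + 1)), σ s = k}).Connected)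
    (zγ : EuclideanSpace ℝ (Fin n))
    (z : Fin N → ℝ → EuclideanSpace ℝ (Fin n))
    (hz : ∀ i, ∀ t', 0 ≤ t' → HasDerivAt (z i)
        ((∑ j, A (σ t') i j • (h (z j t') - h (z i t'))) +
          d (σ t') i • (h zγ - h (z i t'))) t') :
    ∀ i, Tendsto (fun t' => z i t') atTop (nhds zγ) := by
  obtain ⟨hV, hV0, hVpos, hVco, -, hq0, hΨ, hineq⟩ := hassump
  have hh := contDiff_of_isPolynomialMap hpoly
  have hquad : ∀ v : Fin M → ℝ, 0 ≤ v ⬝ᵥ Ψ.mulVec v ∧ (v ⬝ᵥ Ψ.mulVec v = 0 → v = 0) := by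
    intro v
    by_cases hv : v = 0
    · simp [hv]
    · have := hΨ.dotProduct_mulVec_pos hv
      simp only [star_trivial] at this
      exact ⟨this.le, fun h0 => absurd h0 this.ne'⟩
  have hgrad : ∀ y, HasGradientAt V (gradient V y) y := fun y =>
    ((hV.differentiable one_ne_zero) y).hasGradientAt
  have hVnn : ∀ y, 0 ≤ V y := fun y => by
    by_cases hy : y = 0
    · rw [hy, hV0]
    · exact (hVpos y hy).le
  have hedge : ∀ y w : EuclideanSpace ℝ (Fin n), (q y - q w) ⬝ᵥ Ψ.mulVec (q y - q w) ≤
      ⟪gradient V y - gradient V w, (h (y + zγ) - h zγ) - (h (w + zγ) - h zγ)⟫ := by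
    intro y w
    have := hineq (y + zγ) (w + zγ) zγ
    simpa using this
  have H : ErrFlow V (gradient V) (fun y => h (y + zγ) - h zγ) A d σ
      (fun s i => z i s - zγ) := by
    refine
      { symm := fun k i j => ((hA k).1.apply i j).symm
        A_nonneg := fun k => (hA k).2.1
        d_nonneg := hd
        ode := fun s hs i => ?_
        grad := hgrad
        V_zero := hV0
        V_pos := hVpos
        V_coercive := hVco
        g_cont := ?_
        f_cont := (hh.continuous.comp (continuous_add_const zγ)).sub continuous_const
        f_lip := fun R => ?_
        g_zero := ?_
        f_zero := by simp
        edge_nonneg := fun y w => (hquad _).1.trans (hedge y w)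
        edge_eq := fun y w h0 => ?_ }
    · have h1 := (hz i s hs).sub_const zγ
      convert h1 using 1
      simp only [errField, sub_add_cancel, sub_sub_sub_cancel_right]
      rw [sub_eq_add_neg, ← smul_neg, neg_sub]
    · exact (InnerProductSpace.toDual ℝ _).symm.continuous.comp (hV.continuous_fderiv one_ne_zero)
    · have h1 : ContDiff ℝ 1 fun y => h (y + zγ) - h zγ :=
        (hh.comp (contDiff_id.add contDiff_const)).sub contDiff_const
      obtain ⟨K, hK⟩ := h1.contDiffOn.exists_lipschitzOnWith one_ne_zero
        (convex_closedBall 0 R) (isCompact_closedBall 0 R)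
      refine ⟨K, K.2, fun y hy => ?_⟩
      have h2 := hK.dist_le_mul y (by simpa using hy) 0
        (by simpa using (norm_nonneg y).trans hy)
      simpa [dist_eq_norm] using h2
    · -- `0` is a minimum of `V`
      have h1 : IsLocalMin V 0 := Eventually.of_forall fun y => by rw [hV0]; exact hVnn y
      simp [gradient, h1.fderiv_eq_zero]
    · have h1 : q y - q w = 0 := (hquad _).2 (le_antisymm ((hedge y w).trans h0.le) (hquad _).1)
      rw [← hq0, ← hq0, sub_eq_zero.1 h1]
  intro i
  have h1 := (H.tendsto_zero hσ hconn i).add_const zγ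
  simpa using h1
end

section
/- (Proposition 1) Let h : ℝⁿ → ℝⁿ be a polynomial map. Suppose there exist a polynomial V : ℝⁿ → ℝ that is a sum of squares of polynomials, positive definite (V(0) = 0, V(x) > 0 for x ≠ 0) and radially unbounded, a polynomial map q : ℝⁿ → ℝ^M with q(α) = 0 ⟺ α = 0, a symmetric positive-definite matrix Ψ ∈ ℝ^{M×M} and an integer m ≥ 1 such that (i) the polynomial α ↦ q(α)ᵀ Ψ q(α) − ‖α‖₂^{2m} is a sum of squares of polynomials in α, and (ii) the polynomial (α,β,γ) ↦ (∇V(α−γ) − ∇V(β−γ)) · (h(α) − h(β)) − (q(α−γ) − q(β−γ))ᵀ Ψ (q(α−γ) − q(β−γ)) is a sum of squares of polynomials in (α,β,γ). Let σ be a switching signal with dwell time τ > 0 on bounded intervals, with interval sequence (t_κ), let A¹,…,Aᵐ be weighted adjacency matrices and d¹,…,dᵐ pinning-gain vectors such that for every κ the adjacency matrices A^{σ(s)} and pinning gains d^{σ(s)}, s ∈ [t_κ, t_{κ+1}), are jointly connected with the leader, and fix z_γ ∈ ℝⁿ. Then every family of differentiable functions z₁,…,z_N : [0,∞) → ℝⁿ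 satisfying ż_i(t) = Σ_j A^{σ(t)}_{ij} (h(z_j(t)) − h(z_i(t))) + d^{σ(t)}_i (h(z_γ) − h(z_i(t))) achieves consensus: z_i(t) → z_γ as t → ∞ for every i. -/
/-!
Why consensus holds. For a base point `γ` put
`U γ s = ∑ i, (V (z i s - γ) - ⟪∇V (zγ - γ), z i s⟫)`. Because the weights are symmetric, the
second certificate bounds the derivative of `U γ` by
`-(1/2) ∑ᵢⱼ Aᵢⱼ Q γ (zᵢ, zⱼ) - ∑ᵢ dᵢ Q γ (zᵢ, zγ)`, where
`Q γ (α, β)` is the `Ψ`-quadratic form of `q (α - γ) - q (β - γ)` (`dissipation_le`). The linear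
term in `U γ` is what makes this true for every `γ` and not only for `γ = zγ`.

* For `γ = zγ` the linear term vanishes and `U zγ = ∑ V (zᵢ - zγ)` is nonincreasing; since `V`
  is radially unbounded, the trajectories stay in a compact set.
* Hence every `U γ` is bounded and nonincreasing, so it converges. The map `q` need not be
  injective, so `γ = zγ` alone does not show that neighbours approach each other. However,
  `Q b (a, b) > 0` whenever `a ≠ b`, because `q 0 = 0` and `q (a - b) ≠ 0`. If the endpoints of
  an active edge stayed apart along a sequence of times, a cluster point `(a, b)` of their
  positions and the choice `γ = b` would force `U b` to drop by a fixed amount infinitely often: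
  the dwell time and the Lipschitz bound on the trajectories make the dissipation last
  (`edge_small`).
* Therefore disagreements along active edges tend to `0`, and so do all velocities
  (`deriv_small`). On an interval of length at most `T` the agents barely move, so the edges
  active at different times of that interval can be chained along a path in the connected
  union graph, giving agreement with the leader (`consensus_of_edges`).
-/

open Matrix Filter
open scoped RealInnerProductSpace

/-- `f : ℝⁿ → ℝ` is a sum of squares of polynomials. -/
def IsSOSFun {n : ℕ} (f : EuclideanSpace ℝ (Fin n) → ℝ) : Prop :=
  ∃ (k : ℕ) (p : Fin k → MvPolynomial (Fin n) ℝ),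
    ∀ x, f x = ∑ i, (MvPolynomial.eval (fun j => x j) (p i)) ^ 2

/-- `f : ℝⁿ × ℝⁿ × ℝⁿ → ℝ` is a sum of squares of polynomials in the joint variables. -/
def IsSOSFun3 {n : ℕ}
    (f : EuclideanSpace ℝ (Fin n) → EuclideanSpace ℝ (Fin n) →
      EuclideanSpace ℝ (Fin n) → ℝ) : Prop :=
  ∃ (k : ℕ) (p : Fin k → MvPolynomial (Fin n ⊕ Fin n ⊕ Fin n) ℝ),
    ∀ α β γ, f α β γ =
      ∑ i, (MvPolynomial.eval
        (Sum.elim (fun j => α j) (Sum.elim (fun j => β j) (fun j => γ j))) (p i)) ^ 2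

open Topology

/-! ### Switched networks with a family of dissipation certificates -/

theorem norm_sub_le_of_walk {E ι : Type*} [NormedAddCommGroup E] {G : SimpleGraph ι}
    {y : ι → E} {B : ℝ}
    (hB : ∀ a b, G.Adj a b → ‖y a - y b‖ ≤ B) :
    ∀ {a b : ι} (p : G.Walk a b), ‖y a - y b‖ ≤ p.length * B := by
  intro a b p
  induction p with
  | nil => simp
  | @cons u v w' hadj p ih =>
    rw [SimpleGraph.Walk.length_cons]
    push_cast
    calc _ ≤ ‖y u - y v‖ + ‖y v - y w'‖ := norm_sub_le_norm_sub_add_norm_sub _ _ _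
      _ ≤ B + p.length * B := add_le_add (hB _ _ hadj) ih
      _ = _ := by ring

section Abstract

variable {E ι : Type*} [NormedAddCommGroup E] [NormedSpace ℝ E] [Fintype ι] {m : ℕ}

/-- The trajectories share one Lipschitz constant: there are finitely many topologies, and each
velocity field is bounded on the compact set. -/
theorem lipschitz_of_compact {K : Set E} (hK : IsCompact K) {x : ι → ℝ → E}
    (hxK : ∀ a s, 0 ≤ s → x a s ∈ K) {h : E → E} (hh : Continuous h)
    (w : Fin m → ι → ι → ℝ) (σ : ℝ → Fin m)
    (hx : ∀ a s, 0 ≤ s →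
      HasDerivAt (x a) (∑ b, w (σ s) a b • (h (x b s) - h (x a s))) s) :
    ∃ C : ℝ, 0 < C ∧ ∀ a s s', 0 ≤ s → 0 ≤ s' → ‖x a s' - x a s‖ ≤ C * |s' - s| := by
  have hpi : IsCompact (Set.pi Set.univ (fun _ : ι => K)) := isCompact_univ_pi fun _ => hK
  have hb : ∀ p : Fin m × ι, ∃ C : ℝ, ∀ y ∈ Set.pi Set.univ (fun _ : ι => K),
      ‖∑ b, w p.1 p.2 b • (h (y b) - h (y p.2))‖ ≤ C := fun p =>
    hpi.exists_bound_of_continuousOn (Continuous.continuousOn (by fun_prop))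
  choose C hC using hb
  obtain ⟨B, hB⟩ := (Set.finite_range C).bddAbove
  refine ⟨max B 1, lt_of_lt_of_le one_pos (le_max_right _ _), fun a s s' hs hs' => ?_⟩
  have := (convex_Ici (0 : ℝ)).norm_image_sub_le_of_norm_hasDerivWithin_le
    (C := max B 1) (fun s hs => (hx a s hs).hasDerivWithinAt) (fun s hs => ?_) hs hs'
  · simpa [Real.norm_eq_abs] using this
  · exact (hC (σ s, a) (fun b => x b s) (fun b _ => hxK b s hs)).trans
      ((hB ⟨_, rfl⟩).trans (le_max_left _ _))

/-- If every `U γ` converges and dissipates at least `w * g γ` along each edge, and `g` separates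
distinct points once the base point is chosen as one of them, then the endpoints of any edge of
topology `k` merge along the times at which `k` is active. The conclusion is phrased for any
continuous `F` vanishing on the diagonal so that it applies to both positions and outputs. -/
theorem edge_small {K : Set E} (hK : IsCompact K) {x : ι → ℝ → E}
    (hxK : ∀ a s, 0 ≤ s → x a s ∈ K) {h : E → E} (hh : Continuous h)
    (w : Fin m → ι → ι → ℝ) (σ : ℝ → Fin m)
    (hx : ∀ a s, 0 ≤ s →
      HasDerivAt (x a) (∑ b, w (σ s) a b • (h (x b s) - h (x a s))) s)
    {τ : ℝ} (hτ : 0 < τ)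
    (hdwell : ∀ s η, 0 ≤ s → 0 < η → η ≤ τ → ∃ c, 0 ≤ c ∧ c ≤ s ∧ s ≤ c + η ∧
      ∀ s' ∈ Set.Icc c (c + η), σ s' = σ s)
    (g : E → E → E → ℝ) (hg : ∀ γ, Continuous fun p : E × E => g γ p.1 p.2)
    (hgpos : ∀ a b, a ≠ b → 0 < g b a b)
    (U U' : E → ℝ → ℝ) (hUlim : ∀ γ, ∃ l, Tendsto (U γ) atTop (𝓝 l))
    (hU : ∀ γ s, 0 ≤ s → HasDerivAt (U γ) (U' γ s) s)
    (hU' : ∀ γ s, 0 ≤ s → ∀ a b, U' γ s ≤ -(w (σ s) a b * g γ (x a s) (x b s)))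
    {k : Fin m} {a b : ι} (hw : 0 < w k a b)
    {F : E → E → ℝ} (hF : Continuous fun p : E × E => F p.1 p.2) (hF0 : ∀ y, F y y = 0)
    {ε : ℝ} (hε : 0 < ε) :
    ∀ᶠ s in atTop, σ s = k → F (x a s) (x b s) < ε := by
  by_contra hcon
  set S : Set ℝ := {s | ¬ (σ s = k → F (x a s) (x b s) < ε)} with hS
  have : NeBot (atTop ⊓ 𝓟 S) := frequently_mem_iff_neBot.1 (not_eventually.1 hcon)
  have hbad : ∀ᶠ s in atTop ⊓ 𝓟 S, s ∈ S := eventually_inf_principal.2 (by simp)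
  have hge : ∀ M : ℝ, ∀ᶠ s in atTop ⊓ 𝓟 S, M ≤ s := fun M =>
    (eventually_ge_atTop M).filter_mono inf_le_left
  obtain ⟨⟨α, β⟩, -, hcl⟩ := (hK.prod hK).exists_mapClusterPt (f := atTop ⊓ 𝓟 S)
    (u := fun s => (x a s, x b s))
    (tendsto_principal.2 ((hge 0).mono fun s hs => ⟨hxK a s hs, hxK b s hs⟩))
  have hne : α ≠ β := by
    rintro rfl
    have h1 : ∀ᶠ p : E × E in 𝓝 (α, α), F p.1 p.2 < ε :=
      hF.continuousAt.eventually_lt continuousAt_const (by simpa [hF0] using hε)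
    obtain ⟨s, hs, hs'⟩ := ((hcl.frequently h1).and_eventually hbad).exists
    exact hs' fun _ => hs
  -- shifting the origin of the certificate to the cluster point `β` makes its value positive
  set δ := g β α β / 2 with hδ
  have hδpos : 0 < δ := half_pos (hgpos α β hne)
  have h2 : ∀ᶠ p : E × E in 𝓝 (α, β), δ < g β p.1 p.2 :=
    continuousAt_const.eventually_lt (hg β).continuousAt (by simp only [hδ]; linarith)
  obtain ⟨ρ, hρ, hball⟩ := Metric.eventually_nhds_iff.1 h2
  obtain ⟨C, hC, hLip⟩ := lipschitz_of_compact hK hxK hh w σ hx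
  -- during a time `η` the pair moves by at most `ρ / 2`, so dissipation persists on the window
  set η := min τ (ρ / (2 * C)) with hη
  have hηpos : 0 < η := lt_min hτ (by positivity)
  have hCη : C * η ≤ ρ / 2 := by
    have : η ≤ ρ / (2 * C) := min_le_right _ _
    calc C * η ≤ C * (ρ / (2 * C)) := by gcongr
      _ = ρ / 2 := by field_simp
  obtain ⟨l, hl⟩ := hUlim β
  set κ := w k a b * δ * η with hκ
  have hκpos : 0 < κ := by positivity
  obtain ⟨M, hM⟩ := eventually_atTop.1 (Metric.tendsto_nhds.1 hl (κ / 2) (half_pos hκpos))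
  obtain ⟨s, hs, hsS, hs0, hsM⟩ := ((hcl.frequently (Metric.ball_mem_nhds (α, β)
    (half_pos hρ))).and_eventually (hbad.and ((hge 0).and (hge (M + η))))).exists
  have hσs : σ s = k := by by_contra hne; exact hsS fun h => absurd h hne
  obtain ⟨c, hc0, hcs, hsc, hconst⟩ := hdwell s η hs0 hηpos (min_le_left _ _)
  have hclose : ∀ i, ∀ s' ∈ Set.Icc c (c + η), dist (x i s') (x i s) ≤ ρ / 2 := by
    intro i s' hs'
    rw [dist_eq_norm]
    refine (hLip i s s' hs0 (hc0.trans hs'.1)).trans (le_trans ?_ hCη)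
    gcongr
    rw [abs_le]; constructor <;> linarith [hs'.1, hs'.2]
  have hder : ∀ s' ∈ Set.Icc c (c + η), U' β s' ≤ -(w k a b * δ) := by
    intro s' hs'
    have h3 := hU' β s' (hc0.trans hs'.1) a b
    rw [hconst s' hs', hσs] at h3
    have h4 : δ < g β (x a s') (x b s') := by
      apply hball (y := (x a s', x b s'))
      have h5 : dist (x a s', x b s') (x a s, x b s) ≤ ρ / 2 := by
        rw [Prod.dist_eq]; exact max_le (hclose a s' hs') (hclose b s' hs')
      calc _ ≤ _ := dist_triangle _ (x a s, x b s) _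
        _ < ρ / 2 + ρ / 2 := add_lt_add_of_le_of_lt h5 hs
        _ = ρ := by ring
    nlinarith
  have hdrop : U β (c + η) - U β c ≤ -(w k a b * δ) * (c + η - c) := by
    have hdU : ∀ s' ∈ Set.Icc c (c + η), HasDerivAt (U β) (U' β s') s' := fun s' hs' =>
      hU β s' (hc0.trans hs'.1)
    refine (convex_Icc c (c + η)).image_sub_le_mul_sub_of_deriv_le
      (fun s' hs' => (hdU s' hs').continuousAt.continuousWithinAt)
      (fun s' hs' => (hdU s' (interior_subset hs')).differentiableAt.differentiableWithinAt)
      (fun s' hs' => ?_) c ⟨le_rfl, by linarith⟩ (c + η) ⟨by linarith, le_rfl⟩ (by linarith)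
    rw [(hdU s' (interior_subset hs')).deriv]
    exact hder s' (interior_subset hs')
  have e1 := abs_lt.1 (hM c (by linarith))
  have e2 := abs_lt.1 (hM (c + η) (by linarith))
  have : -(w k a b * δ) * (c + η - c) = -κ := by rw [hκ]; ring
  linarith [e1.1, e1.2, e2.1, e2.2]

/-- Every velocity tends to `0`, because each active edge contributes a vanishing term. -/
theorem deriv_small (w : Fin m → ι → ι → ℝ) (hw0 : ∀ k a b, 0 ≤ w k a b) (σ : ℝ → Fin m)
    {x : ι → ℝ → E} {h : E → E} (hh : Continuous h)
    (hedge : ∀ k a b, 0 < w k a b → ∀ F : E → E → ℝ, (Continuous fun p : E × E => F p.1 p.2) →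
      (∀ y, F y y = 0) → ∀ ε > 0, ∀ᶠ s in atTop, σ s = k → F (x a s) (x b s) < ε) (a : ι) :
    Tendsto (fun s => ∑ b, w (σ s) a b • (h (x b s) - h (x a s))) atTop (𝓝 0) := by
  rw [show (0 : E) = ∑ _b : ι, (0 : E) by simp]
  refine tendsto_finsetSum _ fun b _ => ?_
  rw [Metric.tendsto_nhds]
  intro ε hε
  have : ∀ᶠ s in atTop, ∀ k, σ s = k → w k a b * ‖h (x b s) - h (x a s)‖ < ε := by
    rw [eventually_all]
    intro k
    rcases (hw0 k a b).eq_or_lt with h0 | h0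
    · exact Eventually.of_forall fun s _ => by rw [← h0]; simpa using hε
    · exact hedge k a b h0 (fun y y' => w k a b * ‖h y' - h y‖) (by fun_prop) (by simp) ε hε
  filter_upwards [this] with s hs
  rw [dist_zero_right, norm_smul, Real.norm_of_nonneg (hw0 _ _ _)]
  exact hs _ rfl

theorem exists_mem_Ico_of_lt (u : ℕ → ℝ) {s : ℝ} (h0 : u 0 ≤ s) :
    ∀ K, s < u K → ∃ l < K, s ∈ Set.Ico (u l) (u (l + 1)) := by
  intro K
  induction K with
  | zero => intro h; exact absurd h0 (not_le.2 h)
  | succ K ih =>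
    intro h
    rcases lt_or_ge s (u K) with h1 | h1
    · obtain ⟨l, hl, hl'⟩ := ih h1
      exact ⟨l, by omega, hl'⟩
    · exact ⟨K, by omega, h1, h⟩

/-- Vanishing disagreement along active edges yields consensus when the edges active during each
interval `[t κ, t (κ + 1))` jointly contain a connected graph. -/
theorem consensus_of_edges (w : Fin m → ι → ι → ℝ) (hw0 : ∀ k a b, 0 ≤ w k a b)
    (σ : ℝ → Fin m) {x : ι → ℝ → E} {h : E → E} (hh : Continuous h)
    (hx : ∀ a s, 0 ≤ s →
      HasDerivAt (x a) (∑ b, w (σ s) a b • (h (x b s) - h (x a s))) s)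
    (hedge : ∀ k a b, 0 < w k a b → ∀ F : E → E → ℝ, (Continuous fun p : E × E => F p.1 p.2) →
      (∀ y, F y y = 0) → ∀ ε > 0, ∀ᶠ s in atTop, σ s = k → F (x a s) (x b s) < ε)
    {t : ℕ → ℝ} {T : ℝ} (hT : 0 < T) (ht0 : t 0 = 0) (htinf : Tendsto t atTop atTop)
    (htT : ∀ κ, t (κ + 1) - t κ ≤ T)
    (G : ℕ → SimpleGraph ι) (hG : ∀ κ, (G κ).Connected)
    (hadj : ∀ κ a b, (G κ).Adj a b → ∃ s ∈ Set.Ico (t κ) (t (κ + 1)),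
      0 < w (σ s) a b ∨ 0 < w (σ s) b a) (a b : ι) :
    Tendsto (fun s => x a s - x b s) atTop (𝓝 0) := by
  classical
  rw [Metric.tendsto_nhds]
  intro ε₀ hε₀
  set n : ℝ := ((Fintype.card ι : ℕ) : ℝ) with hn
  -- on one interval an edge costs `ε` plus a drift `ε * T` at each end; a path has at most `n` edges
  set ε := ε₀ / ((n + 1) * (1 + 2 * T) + 1) with hε
  have hn0 : 0 ≤ n := by positivity
  have hεpos : 0 < ε := by positivity
  have hpair : ∀ᶠ s in atTop, ∀ k a b, 0 < w k a b → σ s = k → ‖x a s - x b s‖ < ε := by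
    simp only [eventually_all]
    intro k a b hk
    exact hedge k a b hk (fun y y' => ‖y - y'‖) (by fun_prop) (by simp) ε hεpos
  have hder : ∀ᶠ s in atTop, ∀ a, ‖∑ b, w (σ s) a b • (h (x b s) - h (x a s))‖ < ε := by
    rw [eventually_all]
    intro a
    simpa using Metric.tendsto_nhds.1 (deriv_small w hw0 σ hh hedge a) ε hεpos
  obtain ⟨M, hM⟩ := eventually_atTop.1 (hpair.and hder)
  filter_upwards [eventually_ge_atTop (max M 0 + T)] with s hs
  have hM0 : M ≤ max M 0 := le_max_left _ _
  have h00 : 0 ≤ max M 0 := le_max_right _ _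
  obtain ⟨K, hK⟩ := (htinf.eventually (eventually_gt_atTop s)).exists
  obtain ⟨κ, -, hκ⟩ := exists_mem_Ico_of_lt t (by rw [ht0]; linarith) K hK
  have hκM : max M 0 ≤ t κ := by linarith [htT κ, hκ.2]
  have hmove : ∀ i, ∀ s₁ ∈ Set.Ico (t κ) (t (κ + 1)), ‖x i s₁ - x i s‖ ≤ ε * T := by
    intro i s₁ hs₁
    have h1 := (convex_Ico (t κ) (t (κ + 1))).norm_image_sub_le_of_norm_hasDerivWithin_le
      (C := ε) (f := x i)
      (fun s hs => (hx i s ((h00.trans hκM).trans hs.1)).hasDerivWithinAt)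
      (fun s hs => ((hM s ((hM0.trans hκM).trans hs.1)).2 i).le) hκ hs₁
    refine h1.trans ?_
    gcongr
    rw [Real.norm_eq_abs, abs_le]
    constructor <;> linarith [hs₁.1, hs₁.2, hκ.1, hκ.2, htT κ]
  have hlink : ∀ s₁ ∈ Set.Ico (t κ) (t (κ + 1)), ∀ i j, 0 < w (σ s₁) i j →
      ‖x i s - x j s‖ ≤ ε * (1 + 2 * T) := by
    intro s₁ hs₁ i j hij
    have h1 := ((hM s₁ ((hM0.trans hκM).trans hs₁.1)).1 _ i j hij rfl).le
    have h2 := hmove i s₁ hs₁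
    have h3 := hmove j s₁ hs₁
    calc ‖x i s - x j s‖ = ‖(x i s₁ - x j s₁) - (x i s₁ - x i s) + (x j s₁ - x j s)‖ := by
          congr 1; abel
      _ ≤ ‖x i s₁ - x j s₁‖ + ‖x i s₁ - x i s‖ + ‖x j s₁ - x j s‖ :=
          (norm_add_le _ _).trans (by gcongr; exact norm_sub_le _ _)
      _ ≤ ε * (1 + 2 * T) := by linarith
  have hB : ∀ i j, (G κ).Adj i j → ‖x i s - x j s‖ ≤ ε * (1 + 2 * T) := by
    intro i j hij
    obtain ⟨s₁, hs₁, h1 | h1⟩ := hadj κ i j hij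
    · exact hlink s₁ hs₁ i j h1
    · rw [norm_sub_rev]; exact hlink s₁ hs₁ j i h1
  obtain ⟨p, hp⟩ := (hG κ).exists_isPath a b
  have hlen : (p.length : ℝ) ≤ n := by
    rw [hn]; exact_mod_cast hp.length_lt.le
  rw [dist_zero_right]
  calc ‖x a s - x b s‖ ≤ p.length * (ε * (1 + 2 * T)) :=
        norm_sub_le_of_walk (y := fun i => x i s) hB p
    _ ≤ n * (ε * (1 + 2 * T)) := by gcongr
    _ < ε * ((n + 1) * (1 + 2 * T) + 1) := by nlinarith [mul_pos hεpos hT]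
    _ = ε₀ := by rw [hε]; field_simp

end Abstract

/-! ### Polynomial certificates and dissipation -/

section Certificates

variable {n N M : ℕ}

theorem differentiable_eval_coord (p : MvPolynomial (Fin n) ℝ) :
    Differentiable ℝ fun x : EuclideanSpace ℝ (Fin n) =>
      MvPolynomial.eval (fun j => x j) p := by
  simp only [MvPolynomial.eval_eq']
  fun_prop

theorem IsSOSFun.differentiable {f : EuclideanSpace ℝ (Fin n) → ℝ} (hf : IsSOSFun f) :
    Differentiable ℝ f := by
  obtain ⟨k, p, hp⟩ := hf
  rw [funext hp]
  exact Differentiable.fun_sum fun i _ => (differentiable_eval_coord (p i)).pow 2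

theorem IsPolynomialMap.continuous {f : EuclideanSpace ℝ (Fin n) → Fin M → ℝ}
    (hf : IsPolynomialMap f) : Continuous f := by
  obtain ⟨p, hp⟩ := hf
  refine continuous_pi fun i => ?_
  simp only [hp]
  exact (differentiable_eval_coord (p i)).continuous

/-- Coupling weights on the vertex set with the leader `none` adjoined: agent `a` is driven by
`b` with weight `leaderWeight A d a b`. The row of the leader is zero, since the leader does not
move, so these weights are not symmetric. -/
def leaderWeight (A : Matrix (Fin N) (Fin N) ℝ) (d : Fin N → ℝ) :
    Option (Fin N) → Option (Fin N) → ℝ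
  | some i, some j => A i j
  | some i, none => d i
  | none, _ => 0

theorem leaderWeight_nonneg {A : Matrix (Fin N) (Fin N) ℝ} (hA : IsWeightedAdjMatrix A)
    {d : Fin N → ℝ} (hd : ∀ i, 0 ≤ d i) : ∀ a b, 0 ≤ leaderWeight A d a b
  | some i, some j => hA.2.1 i j
  | some i, none => hd i
  | none, _ => le_rfl

/-- Summation by parts for a symmetric network with a pinned leader. -/
theorem dissipation_identity {E : Type*} [NormedAddCommGroup E] [InnerProductSpace ℝ E]
    {A : Matrix (Fin N) (Fin N) ℝ} (hA : A.IsSymm) (d : Fin N → ℝ)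
    (P H : Option (Fin N) → E) :
    ∑ i, ⟪P (some i) - P none, ∑ b, leaderWeight A d (some i) b • (H b - H (some i))⟫ =
      -(1 / 2 * ∑ i, ∑ j, A i j * ⟪P (some i) - P (some j), H (some i) - H (some j)⟫
        + ∑ i, d i * ⟪P (some i) - P none, H (some i) - H none⟫) := by
  have h1 : ∀ i, ⟪P (some i) - P none,
      ∑ b, leaderWeight A d (some i) b • (H b - H (some i))⟫ =
      ∑ j, A i j * ⟪P (some i) - P none, H (some j) - H (some i)⟫
        - d i * ⟪P (some i) - P none, H (some i) - H none⟫ := by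
    intro i
    rw [Fintype.sum_option, inner_add_right, inner_sum]
    simp only [leaderWeight, inner_smul_right]
    rw [← neg_sub (H (some i)) (H none), inner_neg_right]
    ring
  have h2 : ∑ i, ∑ j, A i j * ⟪P (some i) - P none, H (some j) - H (some i)⟫ =
      ∑ i, ∑ j, A i j * ⟪P (some j) - P none, H (some i) - H (some j)⟫ := by
    rw [Finset.sum_comm]
    refine Finset.sum_congr rfl fun i _ => Finset.sum_congr rfl fun j _ => ?_
    rw [hA.apply i j]
  have h3 : ∑ i, ∑ j, A i j * ⟪P (some i) - P none, H (some j) - H (some i)⟫ +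
      ∑ i, ∑ j, A i j * ⟪P (some j) - P none, H (some i) - H (some j)⟫ =
      -∑ i, ∑ j, A i j * ⟪P (some i) - P (some j), H (some i) - H (some j)⟫ := by
    simp only [← Finset.sum_add_distrib, ← Finset.sum_neg_distrib]
    refine Finset.sum_congr rfl fun i _ => Finset.sum_congr rfl fun j _ => ?_
    simp only [inner_sub_left, inner_sub_right]
    ring
  simp only [h1, Finset.sum_sub_distrib]
  linarith

/-- Each single edge bounds the dissipation from below; the factor `1 / 2` is needed because an
edge between followers is weighted by `1 / 2` in `dissipation_identity`. -/
theorem dissipation_le {E : Type*} [NormedAddCommGroup E] [InnerProductSpace ℝ E]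
    {A : Matrix (Fin N) (Fin N) ℝ} (hA : IsWeightedAdjMatrix A) {d : Fin N → ℝ}
    (hd : ∀ i, 0 ≤ d i) (P H : Option (Fin N) → E) (Q : Option (Fin N) → Option (Fin N) → ℝ)
    (hQ0 : ∀ a b, 0 ≤ Q a b) (hQ : ∀ a b, Q a b ≤ ⟪P a - P b, H a - H b⟫)
    (a b : Option (Fin N)) :
    ∑ i, ⟪P (some i) - P none, ∑ b, leaderWeight A d (some i) b • (H b - H (some i))⟫ ≤
      -(leaderWeight A d a b * (Q a b / 2)) := by
  rw [dissipation_identity hA.1]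
  have hI : ∀ a b, 0 ≤ ⟪P a - P b, H a - H b⟫ := fun a b => (hQ0 a b).trans (hQ a b)
  have e1 : ∀ i j, 0 ≤ A i j * ⟪P (some i) - P (some j), H (some i) - H (some j)⟫ :=
    fun i j => mul_nonneg (hA.2.1 i j) (hI _ _)
  have e2 : ∀ i, 0 ≤ d i * ⟪P (some i) - P none, H (some i) - H none⟫ :=
    fun i => mul_nonneg (hd i) (hI _ _)
  have s1 : 0 ≤ ∑ i, ∑ j, A i j * ⟪P (some i) - P (some j), H (some i) - H (some j)⟫ :=
    Finset.sum_nonneg fun i _ => Finset.sum_nonneg fun j _ => e1 i j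
  have s2 : 0 ≤ ∑ i, d i * ⟪P (some i) - P none, H (some i) - H none⟫ :=
    Finset.sum_nonneg fun i _ => e2 i
  match a, b with
  | none, _ => simp only [leaderWeight]; linarith
  | some i, none =>
    have := Finset.single_le_sum (fun i _ => e2 i) (Finset.mem_univ i)
    have h3 := mul_le_mul_of_nonneg_left (hQ (some i) none) (hd i)
    have h4 := mul_nonneg (hd i) (hQ0 (some i) none)
    simp only [leaderWeight]
    linarith
  | some i, some j =>
    have h1 := Finset.single_le_sum (f := fun i => ∑ j, A i j *
      ⟪P (some i) - P (some j), H (some i) - H (some j)⟫)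
      (fun i _ => Finset.sum_nonneg fun j _ => e1 i j) (Finset.mem_univ i)
    have h2 := Finset.single_le_sum (fun j _ => e1 i j) (Finset.mem_univ j)
    have h3 := mul_le_mul_of_nonneg_left (hQ (some i) (some j)) (hA.2.1 i j)
    simp only [leaderWeight]
    linarith

end Certificates

/-! ### Dwell time and monotone limits -/

section Switching

theorem dwell_step {m : ℕ} {σ : ℝ → Fin m} {τ T : ℝ} {t : ℕ → ℝ}
    (hσ : IsDwellSwitching σ τ T t) (κ : ℕ) : t κ + τ ≤ t (κ + 1) := by
  obtain ⟨hτ, -, -, -, -, hsub⟩ := hσ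
  obtain ⟨s, u, hs, hu0, hus, hlen, -⟩ := hsub κ
  have : ∀ l, l < s → u 0 + τ ≤ u (l + 1) := by
    intro l
    induction l with
    | zero => intro hl; have := hlen 0 hl; linarith
    | succ l ih => intro hl; have := hlen (l + 1) hl; have := ih (by omega); linarith
  have := this (s - 1) (by omega)
  rwa [Nat.sub_add_cancel hs, hu0, hus] at this

theorem dwell_tendsto {m : ℕ} {σ : ℝ → Fin m} {τ T : ℝ} {t : ℕ → ℝ}
    (hσ : IsDwellSwitching σ τ T t) : Tendsto t atTop atTop := by
  have hle : ∀ κ : ℕ, (κ : ℝ) * τ ≤ t κ := by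
    intro κ
    induction κ with
    | zero => simp [hσ.2.2.1]
    | succ κ ih => have := dwell_step hσ κ; push_cast; linarith
  exact tendsto_atTop_mono hle (tendsto_natCast_atTop_atTop.atTop_mul_const hσ.1)

/-- Every time lies in a window of prescribed length `η ≤ τ / 2` on which the topology is constant.
The window ends at `s` if enough of the current subinterval has elapsed, and starts at `s`
otherwise. -/
theorem dwell_window {m : ℕ} {σ : ℝ → Fin m} {τ T : ℝ} {t : ℕ → ℝ}
    (hσ : IsDwellSwitching σ τ T t) (s η : ℝ) (hs : 0 ≤ s) (hη : 0 < η) (hητ : η ≤ τ / 2) :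
    ∃ c, 0 ≤ c ∧ c ≤ s ∧ s ≤ c + η ∧ ∀ s' ∈ Set.Icc c (c + η), σ s' = σ s := by
  have hinf := dwell_tendsto hσ
  obtain ⟨hτ, -, ht0, hmono, -, hsub⟩ := hσ
  obtain ⟨K, hK⟩ := (hinf.eventually (eventually_gt_atTop s)).exists
  obtain ⟨κ, -, hκ⟩ := exists_mem_Ico_of_lt t (by rw [ht0]; exact hs) K hK
  obtain ⟨S, u, -, hu0, huS, hlen, hconst⟩ := hsub κ
  obtain ⟨l, hl, hls⟩ := exists_mem_Ico_of_lt u (s := s) (by rw [hu0]; exact hκ.1) S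
    (by rw [huS]; exact hκ.2)
  have htκ : 0 ≤ t κ := by rw [← ht0]; exact hmono.monotone (Nat.zero_le κ)
  have hlen' := hlen l hl
  have hul : 0 ≤ u l := by
    have : ∀ i, i < S → u 0 ≤ u i := by
      intro i
      induction i with
      | zero => intro _; exact le_rfl
      | succ i ih => intro hi; have := hlen i (by omega); have := ih (by omega); linarith
    have := this l hl
    linarith
  rcases le_or_gt (u l) (s - η) with h1 | h1
  · refine ⟨s - η, by linarith, by linarith, by linarith, fun s' hs' => ?_⟩
    exact hconst l hl s' ⟨by linarith [hs'.1], by linarith [hs'.2, hls.2]⟩ s hls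
  · refine ⟨s, hs, le_rfl, by linarith, fun s' hs' => ?_⟩
    exact hconst l hl s' ⟨by linarith [hs'.1, hls.1], by linarith [hs'.2]⟩ s hls

theorem tendsto_of_deriv_nonpos {f f' : ℝ → ℝ} (hf : ∀ s, 0 ≤ s → HasDerivAt f (f' s) s)
    (hf' : ∀ s, 0 ≤ s → f' s ≤ 0) :
    AntitoneOn f (Set.Ici 0) ∧
      ∀ B, (∀ s, 0 ≤ s → B ≤ f s) → ∃ l, Tendsto f atTop (𝓝 l) := by
  have hanti : AntitoneOn f (Set.Ici 0) := by
    refine antitoneOn_of_deriv_nonpos (convex_Ici 0)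
      (fun s hs => (hf s hs).continuousAt.continuousWithinAt)
      (fun s hs => (hf s (interior_subset hs)).differentiableAt.differentiableWithinAt)
      (fun s hs => ?_)
    rw [(hf s (interior_subset hs)).deriv]
    exact hf' s (interior_subset hs)
  refine ⟨hanti, fun B hB => ?_⟩
  have hg : Antitone fun s => f (max s 0) := fun s s' hss' =>
    hanti (Set.mem_Ici.2 (le_max_right _ _)) (Set.mem_Ici.2 (le_max_right _ _))
      (max_le_max_right 0 hss')
  refine ⟨_, (tendsto_atTop_ciInf hg ⟨B, ?_⟩).congr' ?_⟩
  · rintro _ ⟨s, rfl⟩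
    exact hB _ (le_max_right _ _)
  · filter_upwards [eventually_ge_atTop 0] with s hs
    rw [max_eq_left hs]

end Switching

/-- Proposition 1: consensus under the SOS certificates (Assumption 2) and joint
connectedness with the leader over each interval `[t κ, t (κ+1))`. -/
theorem stmt9 {n M N m : ℕ}
    (h : EuclideanSpace ℝ (Fin n) → EuclideanSpace ℝ (Fin n))
    (hpoly : IsPolynomialMap (fun x => (h x : Fin n → ℝ)))
    (V : EuclideanSpace ℝ (Fin n) → ℝ)
    (hVsos : IsSOSFun V)
    (hV0 : V 0 = 0) (hVpos : ∀ x, x ≠ 0 → 0 < V x)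
    (hVrad : Tendsto V (cocompact _) atTop)
    (q : EuclideanSpace ℝ (Fin n) → (Fin M → ℝ))
    (hqpoly : IsPolynomialMap q)
    (hq0 : ∀ α, q α = 0 ↔ α = 0)
    (Ψ : Matrix (Fin M) (Fin M) ℝ) (hΨ : Ψ.PosDef)
    (r : ℕ) (hr : 1 ≤ r)
    (hsos1 : IsSOSFun (fun α => q α ⬝ᵥ Ψ.mulVec (q α) - (∑ j, (α j) ^ 2) ^ r))
    (hsos2 : IsSOSFun3 (fun α β γ =>
      ⟪gradient V (α - γ) - gradient V (β - γ), h α - h β⟫ -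
        (q (α - γ) - q (β - γ)) ⬝ᵥ Ψ.mulVec (q (α - γ) - q (β - γ))))
    (σ : ℝ → Fin m) (τ T : ℝ) (t : ℕ → ℝ)
    (hσ : IsDwellSwitching σ τ T t)
    (A : Fin m → Matrix (Fin N) (Fin N) ℝ) (hA : ∀ k, IsWeightedAdjMatrix (A k))
    (d : Fin m → Fin N → ℝ) (hd : ∀ k i, 0 ≤ d k i)
    (hconn : ∀ κ, (jointLeaderGraph A d
        {k | ∃ s ∈ Set.Ico (t κ) (t (κ + 1)), σ s = k}).Connected)
    (zγ : EuclideanSpace ℝ (Fin n))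
    (z : Fin N → ℝ → EuclideanSpace ℝ (Fin n))
    (hz : ∀ i, ∀ t', 0 ≤ t' → HasDerivAt (z i)
        ((∑ j, A (σ t') i j • (h (z j t') - h (z i t'))) +
          d (σ t') i • (h zγ - h (z i t'))) t') :
    ∀ i, Tendsto (fun t' => z i t') atTop (nhds zγ) := by
  have hτ : 0 < τ := hσ.1
  have hh : Continuous h := by
    have := hpoly.continuous
    exact (PiLp.continuous_toLp 2 _).comp this
  have hVd := hVsos.differentiable
  have hVc := hVd.continuous
  have hqc := hqpoly.continuous
  set w : Fin m → Option (Fin N) → Option (Fin N) → ℝ :=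
    fun k => leaderWeight (A k) (d k) with hw
  have hw0 : ∀ k a b, 0 ≤ w k a b := fun k => leaderWeight_nonneg (hA k) (hd k)
  set x : Option (Fin N) → ℝ → EuclideanSpace ℝ (Fin n) :=
    fun a => a.elim (fun _ => zγ) z with hxdef
  have hx : ∀ a s, 0 ≤ s →
      HasDerivAt (x a) (∑ b, w (σ s) a b • (h (x b s) - h (x a s))) s := by
    rintro (_ | i) s hs
    · simpa [hw, hxdef, leaderWeight] using hasDerivAt_const s zγ
    · have := hz i s hs
      rw [Fintype.sum_option, add_comm]
      exact this
  have hQpos : ∀ v, v ≠ 0 → 0 < v ⬝ᵥ Ψ.mulVec v := fun v hv => by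
    simpa using hΨ.dotProduct_mulVec_pos hv
  have hQnonneg : ∀ v, 0 ≤ v ⬝ᵥ Ψ.mulVec v := fun v => by
    rcases eq_or_ne v 0 with rfl | hv
    · simp
    · exact (hQpos v hv).le
  set Q : EuclideanSpace ℝ (Fin n) → EuclideanSpace ℝ (Fin n) → EuclideanSpace ℝ (Fin n) → ℝ :=
    fun γ α β => (q (α - γ) - q (β - γ)) ⬝ᵥ Ψ.mulVec (q (α - γ) - q (β - γ)) with hQ
  have hQle : ∀ γ α β, Q γ α β ≤ ⟪gradient V (α - γ) - gradient V (β - γ), h α - h β⟫ := by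
    obtain ⟨k, p, hp⟩ := hsos2
    intro γ α β
    have h1 := hp α β γ
    have h2 : 0 ≤ ∑ i, (MvPolynomial.eval
        (Sum.elim (fun j => α j) (Sum.elim (fun j => β j) (fun j => γ j))) (p i)) ^ 2 :=
      Finset.sum_nonneg fun i _ => sq_nonneg _
    rw [← h1] at h2
    simp only [hQ]
    linarith
  set U : EuclideanSpace ℝ (Fin n) → ℝ → ℝ :=
    fun γ s => ∑ i, (V (z i s - γ) - ⟪gradient V (zγ - γ), z i s⟫) with hU
  set U' : EuclideanSpace ℝ (Fin n) → ℝ → ℝ :=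
    fun γ s => ∑ i, ⟪gradient V (z i s - γ) - gradient V (zγ - γ),
      ∑ b, w (σ s) (some i) b • (h (x b s) - h (x (some i) s))⟫ with hU'
  have hUd : ∀ γ s, 0 ≤ s → HasDerivAt (U γ) (U' γ s) s := by
    intro γ s hs
    refine HasDerivAt.fun_sum fun i _ => ?_
    have h1 := hx (some i) s hs
    have h2 := (hVd (z i s - γ)).hasGradientAt.hasFDerivAt.comp_hasDerivAt s (h1.sub_const γ)
    have h3 := (innerSL ℝ (gradient V (zγ - γ))).hasFDerivAt.comp_hasDerivAt s h1
    rw [inner_sub_left]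
    exact h2.sub h3
  have hUle : ∀ γ s, 0 ≤ s → ∀ a b,
      U' γ s ≤ -(w (σ s) a b * (Q γ (x a s) (x b s) / 2)) := by
    intro γ s _ a b
    exact dissipation_le (hA (σ s)) (hd (σ s)) (fun a => gradient V (x a s - γ))
      (fun a => h (x a s)) (fun a b => Q γ (x a s) (x b s)) (fun a b => hQnonneg _)
      (fun a b => hQle _ _ _) a b
  have hUnonpos : ∀ γ s, 0 ≤ s → U' γ s ≤ 0 := by
    intro γ s hs
    simpa [hw, leaderWeight] using hUle γ s hs none none
  -- the origin minimises `V`, so the linear term of `U zγ` vanishes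
  have hgrad0 : gradient V 0 = 0 := by
    have hmin : IsLocalMin V 0 := Eventually.of_forall fun y => by
      rcases eq_or_ne y 0 with rfl | hy
      · exact le_rfl
      · rw [hV0]; exact (hVpos y hy).le
    rw [gradient, hmin.fderiv_eq_zero, map_zero]
  have hVnonneg : ∀ y, 0 ≤ V y := fun y => by
    rcases eq_or_ne y 0 with rfl | hy
    · exact hV0.ge
    · exact (hVpos y hy).le
  obtain ⟨K, hK, hxK⟩ : ∃ K, IsCompact K ∧ ∀ a s, 0 ≤ s → x a s ∈ K := by
    obtain ⟨K₀, hK₀, hsub⟩ := mem_cocompact.1 (hVrad.eventually_gt_atTop (U zγ 0))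
    refine ⟨insert zγ ((fun y => y + zγ) '' K₀),
      (hK₀.image (by fun_prop)).insert zγ, ?_⟩
    rintro (_ | i) s hs
    · exact Set.mem_insert _ _
    · refine Set.mem_insert_of_mem _ ⟨z i s - zγ, ?_, by simp [hxdef]⟩
      by_contra hnot
      have h1 : U zγ 0 < V (z i s - zγ) := hsub hnot
      have h2 : U zγ s ≤ U zγ 0 := (tendsto_of_deriv_nonpos (hUd zγ) (hUnonpos zγ)).1
        (Set.mem_Ici.2 le_rfl) (Set.mem_Ici.2 hs) hs
      have h3 : V (z i s - zγ) ≤ U zγ s := by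
        simp only [hU, sub_self, hgrad0, inner_zero_left, sub_zero]
        exact Finset.single_le_sum (f := fun i => V (z i s - zγ))
          (fun i _ => hVnonneg _) (Finset.mem_univ i)
      linarith
  have hUlim : ∀ γ, ∃ l, Tendsto (U γ) atTop (𝓝 l) := by
    intro γ
    have hc : Continuous fun y : Fin N → EuclideanSpace ℝ (Fin n) =>
        ∑ i, (V (y i - γ) - ⟪gradient V (zγ - γ), y i⟫) := by fun_prop
    obtain ⟨B, hB⟩ := (isCompact_univ_pi fun _ : Fin N => hK).exists_bound_of_continuousOn
      hc.continuousOn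
    refine (tendsto_of_deriv_nonpos (hUd γ) (hUnonpos γ)).2 (-B) fun s hs => ?_
    exact (abs_le.1 (hB (fun i => z i s) fun i _ => hxK (some i) s hs)).1
  have hgc : ∀ γ, Continuous fun p : EuclideanSpace ℝ (Fin n) × EuclideanSpace ℝ (Fin n) =>
      Q γ p.1 p.2 / 2 := by
    intro γ
    have h1 : Continuous fun p : EuclideanSpace ℝ (Fin n) × EuclideanSpace ℝ (Fin n) =>
      q (p.1 - γ) - q (p.2 - γ) := by fun_prop
    exact (h1.dotProduct (continuous_const.matrix_mulVec h1)).div_const 2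
  have hgpos : ∀ a b, a ≠ b → 0 < Q b a b / 2 := by
    intro a b hab
    refine half_pos (hQpos _ ?_)
    rw [sub_self, (hq0 0).2 rfl, sub_zero, Ne, hq0, sub_eq_zero]
    exact hab
  have hedge : ∀ k a b, 0 < w k a b → ∀ F : EuclideanSpace ℝ (Fin n) →
      EuclideanSpace ℝ (Fin n) → ℝ, (Continuous fun p : EuclideanSpace ℝ (Fin n) ×
      EuclideanSpace ℝ (Fin n) => F p.1 p.2) → (∀ y, F y y = 0) → ∀ ε > 0,
      ∀ᶠ s in atTop, σ s = k → F (x a s) (x b s) < ε := fun k a b hk F hF hF0 ε hε =>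
    edge_small hK hxK hh w σ hx (half_pos hτ) (dwell_window hσ) (fun γ α β => Q γ α β / 2)
      hgc hgpos U U' hUlim hUd hUle hk hF hF0 hε
  have hadj : ∀ κ a b, (jointLeaderGraph A d
      {k | ∃ s ∈ Set.Ico (t κ) (t (κ + 1)), σ s = k}).Adj a b →
      ∃ s ∈ Set.Ico (t κ) (t (κ + 1)), 0 < w (σ s) a b ∨ 0 < w (σ s) b a := by
    intro κ a b hab
    rw [jointLeaderGraph, SimpleGraph.fromRel_adj] at hab
    rcases a with _ | i <;> rcases b with _ | j
    · exact absurd rfl hab.1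
    · obtain ⟨-, h1 | ⟨_, ⟨s, hs, rfl⟩, hk⟩⟩ := hab
      · exact h1.elim
      · exact ⟨s, hs, Or.inr hk⟩
    · obtain ⟨-, ⟨_, ⟨s, hs, rfl⟩, hk⟩ | h1⟩ := hab
      · exact ⟨s, hs, Or.inl hk⟩
      · exact h1.elim
    · obtain ⟨-, ⟨_, ⟨s, hs, rfl⟩, hk⟩ | ⟨_, ⟨s, hs, rfl⟩, hk⟩⟩ := hab
      · exact ⟨s, hs, Or.inl hk⟩
      · exact ⟨s, hs, Or.inr hk⟩
  intro i
  exact tendsto_sub_nhds_zero_iff.1 (consensus_of_edges w hw0 σ hh hx hedge hσ.2.1 hσ.2.2.1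
    (dwell_tendsto hσ) hσ.2.2.2.2.1 _ hconn hadj (some i) none)
end

section
/- Let V : ℝⁿ → ℝ be continuously differentiable, let h₁ : ℝⁿ → ℝⁿ be odd (h₁(−a) = −h₁(a)), and suppose ∇V(α) · h₁(β) = ∇V(β) · h₁(α) for all α, β ∈ ℝⁿ. Let A ∈ ℝ^{N×N} be a weighted adjacency matrix and d ∈ ℝ^N a pinning-gain vector. Then for all ω₁,…,ω_N, ν₁,…,ν_N ∈ ℝⁿ the following cancellation identity holds: (1/2) Σ_{i=1}^{N} Σ_{j=1}^{N} A_ij ∇V(ω_j − ω_i) · (h₁(ν_j) − h₁(ν_i)) + Σ_{i=1}^{N} d_i ∇V(ω_i) · h₁(ν_i) + Σ_{i=1}^{N} Σ_{j=1}^{N} A_ij ∇V(ν_i) · h₁(ω_j − ω_i) − Σ_{i=1}^{N} d_i ∇V(ν_i) · h₁(ω_i) = 0. -/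
/-!
The symmetry of `⟪∇V α, h₁ β⟫` makes the two pinning sums equal. Together with the oddness of `h₁`
it also rewrites the `(i, j)` summand of the first double sum as minus the `(i, j)` and `(j, i)`
summands of the other double sum; since `A` is symmetric, these contribute equally, and the
factor `1 / 2` yields exact cancellation.
-/

open scoped RealInnerProductSpace

/-- The cancellation identity used in the proof of Theorem 2:
`(1/2) ∑_{i,j} A i j ∇V(ωⱼ-ωᵢ) ⬝ (h₁(νⱼ)-h₁(νᵢ)) + ∑ᵢ dᵢ ∇V(ωᵢ) ⬝ h₁(νᵢ)`
`+ ∑_{i,j} A i j ∇V(νᵢ) ⬝ h₁(ωⱼ-ωᵢ) - ∑ᵢ dᵢ ∇V(νᵢ) ⬝ h₁(ωᵢ) = 0`. -/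
theorem stmt11 {n N : ℕ} (V : EuclideanSpace ℝ (Fin n) → ℝ) (hV : ContDiff ℝ 1 V)
    (h₁ : EuclideanSpace ℝ (Fin n) → EuclideanSpace ℝ (Fin n))
    (hodd : ∀ a, h₁ (-a) = -h₁ a)
    (hsym : ∀ α β, ⟪gradient V α, h₁ β⟫ = ⟪gradient V β, h₁ α⟫)
    (A : Matrix (Fin N) (Fin N) ℝ) (hA : IsWeightedAdjMatrix A)
    (d : Fin N → ℝ) (hd : ∀ i, 0 ≤ d i)
    (ω ν : Fin N → EuclideanSpace ℝ (Fin n)) :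
    (1 / 2) * ∑ i, ∑ j, A i j * ⟪gradient V (ω j - ω i), h₁ (ν j) - h₁ (ν i)⟫ +
        ∑ i, d i * ⟪gradient V (ω i), h₁ (ν i)⟫ +
        ∑ i, ∑ j, A i j * ⟪gradient V (ν i), h₁ (ω j - ω i)⟫ -
        ∑ i, d i * ⟪gradient V (ν i), h₁ (ω i)⟫ = 0 := by
  obtain ⟨hAsymm, -, -⟩ := hA
  have hd_cancel : ∑ i, d i * ⟪gradient V (ω i), h₁ (ν i)⟫ =
      ∑ i, d i * ⟪gradient V (ν i), h₁ (ω i)⟫ :=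
    Finset.sum_congr rfl fun i _ => by rw [hsym]
  have hterm : ∀ i j, A i j * ⟪gradient V (ω j - ω i), h₁ (ν j) - h₁ (ν i)⟫ =
      -(A j i * ⟪gradient V (ν j), h₁ (ω i - ω j)⟫) -
        A i j * ⟪gradient V (ν i), h₁ (ω j - ω i)⟫ := by
    intro i j
    rw [inner_sub_right, hsym _ (ν j), hsym _ (ν i), hAsymm.apply i j,
      ← neg_sub (ω i) (ω j), hodd, inner_neg_right, inner_neg_right]
    ring
  -- Exchanging the two indices identifies the first half of the split sum with the second.
  have hswap : ∑ i, ∑ j, A j i * ⟪gradient V (ν j), h₁ (ω i - ω j)⟫ =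
      ∑ i, ∑ j, A i j * ⟪gradient V (ν i), h₁ (ω j - ω i)⟫ := Finset.sum_comm
  simp only [hterm, Finset.sum_sub_distrib, Finset.sum_neg_distrib]
  rw [hswap, hd_cancel]
  ring
end
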